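/- arXiv:2412.01602 — 3 statements merged into one kernel-verified Lean document; each statement's English description precedes it below -/
import Mathlib

section
/- Let G = (V,E) be a graph without isolated vertices. The h*-polynomial of the cosmological polytope C_G is palindromic, i.e., h*_i(C_G) = h*_{|E|−i}(C_G) for all 0 ≤ i ≤ |E| (equivalently, C_G is Gorenstein), if and only if every edge of G is a loop. -/
open Polynomial Pointwise

/-- The set of vertices (generating points) of the cosmological polytope of the
multigraph with edge-endpoint map `ends : E → Sym2 V`. -/
def cosmoVertices {V E : Type*} [DecidableEq V] [DecidableEq E] (ends : E → Sym2 V) :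
    Set ((V ⊕ E) → ℝ) :=
  { x | ∃ (f : E) (i j : V), ends f = s(i, j) ∧
      (x = Pi.single (Sum.inl i) 1 + Pi.single (Sum.inl j) 1 - Pi.single (Sum.inr f) 1 ∨
       x = Pi.single (Sum.inl i) 1 - Pi.single (Sum.inl j) 1 + Pi.single (Sum.inr f) 1 ∨
       x = -Pi.single (Sum.inl i) 1 + Pi.single (Sum.inl j) 1 + Pi.single (Sum.inr f) 1) }

/-- The cosmological polytope of a multigraph. -/
def cosmoPolytope {V E : Type*} [DecidableEq V] [DecidableEq E] (ends : E → Sym2 V) :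
    Set ((V ⊕ E) → ℝ) :=
  convexHull ℝ (cosmoVertices ends)

/-- Number of lattice points of the `t`-th dilate of `P`. -/
noncomputable def latticePointCount {ι : Type*} (P : Set (ι → ℝ)) (t : ℕ) : ℕ :=
  Set.ncard { x : ι → ℤ | (fun k => (x k : ℝ)) ∈ (t : ℝ) • P }

/-- The Ehrhart series of `P` as a formal power series. -/
noncomputable def ehrhartSeries {ι : Type*} (P : Set (ι → ℝ)) : PowerSeries ℚ :=
  PowerSeries.mk fun t => if t = 0 then 1 else (latticePointCount P t : ℚ)

/-- `h` is the `h^*`-polynomial of the `d`-dimensional lattice polytope `P`: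
`Ehr(P; z) = h(z) / (1-z)^(d+1)` as formal power series. -/
def IsHStarPoly {ι : Type*} (P : Set (ι → ℝ)) (d : ℕ) (h : Polynomial ℚ) : Prop :=
  ehrhartSeries P * (1 - PowerSeries.X) ^ (d + 1) = (h : PowerSeries ℚ)

/-- Adjacency relation of the multigraph given by `ends`. -/
def multigraphAdj {V E : Type*} (ends : E → Sym2 V) (i j : V) : Prop :=
  ∃ f, ends f = s(i, j)

/-- Reachability in the multigraph given by `ends`. -/
def multigraphReach {V E : Type*} (ends : E → Sym2 V) : V → V → Prop :=
  Relation.ReflTransGen (multigraphAdj ends)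

/-- The number of connected components of the multigraph given by `ends`. -/
noncomputable def numComponents {V E : Type*} (ends : E → Sym2 V) : ℕ :=
  Nat.card (Quot (multigraphReach ends))

/-!
Write a point `y` of the cone over `C_G` as nonnegative multiples `y_f⁻` of the vertices
`e_i + e_j - e_f` plus a remainder: `y` lies in the cone if and only if some flow within the edge
capacities `y_f⁺` leaves no vertex of the remainder in deficit, which by Gale's theorem is a family
of inequalities indexed by the vertex sets `S`. Fix the coordinate `k` of a nonloop edge `f = ij`.
For `k ≥ 0`, the inequalities whose `S` does not separate `i` from `j` are those of the contraction
`G / f`, and by submodularity the others confine the coordinate along `e_i - e_j` to an interval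
`[L - k, U + k]` with `L ≤ U`. So there are `2k` more lattice points than for `k = 0` over every
lattice point of `G / f`, and summation over `k` gives the recursion
`h*(G) = (1 + z) h*(G ∖ f) + 2z h*(G / f)`; a loop contributes only the first summand. Hence `h*`
has constant coefficient `1`, it is `(1 + z)^|E|` if all edges are loops, and a single nonloop makes
its coefficient of `z^|E|` exceed `1`.
-/

namespace CosmologicalPolytope

open Finset

/-! ### Cuts and flows -/

section Cuts

variable {V E R : Type*} [DecidableEq V] [CommRing R]

/-- The indicator of the event that `S` separates the two endpoints of the oriented edge `p`. -/
def cutIndicator (S : Finset V) (p : V × V) : R :=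
  if (p.1 ∈ S ↔ p.2 ∈ S) then 0 else 1

/-- The vector `e_i - e_j` of an oriented edge `p = (i, j)`: the net outflow of a unit flow
along `p`. -/
def edgeDiff (p : V × V) : V → R :=
  Pi.single p.1 1 - Pi.single p.2 1

theorem cutIndicator_of_loop {p : V × V} (hp : p.1 = p.2) (S : Finset V) :
    (cutIndicator S p : R) = 0 := by
  simp [cutIndicator, hp]

theorem sum_edgeDiff (S : Finset V) (p : V × V) :
    ∑ v ∈ S, (edgeDiff p v : R) = (if p.1 ∈ S then 1 else 0) - if p.2 ∈ S then 1 else 0 := by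
  simp [edgeDiff, sum_sub_distrib]

theorem sum_add_smul_edgeDiff (S : Finset V) (a : V → R) (x : R) (p : V × V) :
    ∑ v ∈ S, (a + x • edgeDiff p : V → R) v =
      ∑ v ∈ S, a v + x * ((if p.1 ∈ S then 1 else 0) - if p.2 ∈ S then 1 else 0) := by
  simp only [Pi.add_apply, Pi.smul_apply, smul_eq_mul, sum_add_distrib, ← mul_sum, sum_edgeDiff]

variable [Fintype E]

/-- The total capacity of the edges with exactly one end in `S`, in the multigraph with oriented
edges `e` and edge capacities `c`. -/
def cutCapacity (e : E → V × V) (c : E → R) (S : Finset V) : R :=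
  ∑ f, c f * cutIndicator S (e f)

theorem cutCapacity_comp_equiv {E' : Type*} [Fintype E'] (σ : E' ≃ E) (e : E → V × V)
    (c : E → R) (S : Finset V) : cutCapacity (e ∘ σ) (c ∘ σ) S = cutCapacity e c S :=
  σ.sum_comp fun f => c f * cutIndicator S (e f)

theorem cutCapacity_option (e : Option E → V × V) (c : Option E → R) (S : Finset V) :
    cutCapacity e c S =
      c none * cutIndicator S (e none) + cutCapacity (e ∘ some) (c ∘ some) S :=
  Fintype.sum_option _

theorem option_elim'_comp_some {α β : Type*} (b : β) (f : α → β) :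
    Option.elim' b f ∘ some = f :=
  rfl

theorem cutCapacity_univ [Fintype V] (e : E → V × V) (c : E → R) : cutCapacity e c univ = 0 := by
  simp [cutCapacity, cutIndicator]

variable [LinearOrder R]

/-- The cut condition of Gale's theorem for the existence of a flow within the capacities `c` that
leaves no vertex of weight `a` in deficit. -/
def CutCondition (e : E → V × V) (c : E → R) (a : V → R) : Prop :=
  ∀ S : Finset V, 0 ≤ ∑ v ∈ S, a v + cutCapacity e c S

theorem cutCondition_comp_equiv_iff {E' : Type*} [Fintype E'] (σ : E' ≃ E) {e : E → V × V}
    {c : E → R} {a : V → R} : CutCondition (e ∘ σ) (c ∘ σ) a ↔ CutCondition e c a := by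
  simp only [CutCondition, cutCapacity_comp_equiv]

theorem cutCondition_option_of_loop {e : Option E → V × V} (he : (e none).1 = (e none).2)
    {c : Option E → R} {a : V → R} :
    CutCondition e c a ↔ CutCondition (e ∘ some) (c ∘ some) a := by
  simp only [CutCondition, cutCapacity_option, cutIndicator_of_loop he, mul_zero, zero_add]

theorem cutCondition_option_of_eq_zero {e : Option E → V × V} {c : Option E → R}
    (hc : c none = 0) {a : V → R} :
    CutCondition e c a ↔ CutCondition (e ∘ some) (c ∘ some) a := by
  simp only [CutCondition, cutCapacity_option, hc, zero_mul, zero_add]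

end Cuts

section Submodular

variable {V R : Type*} [DecidableEq V] [CommRing R] [LinearOrder R]

/-- A submodular set function. -/
def IsSubmodular (ψ : Finset V → R) : Prop :=
  ∀ S T, ψ (S ∪ T) + ψ (S ∩ T) ≤ ψ S + ψ T

variable [IsStrictOrderedRing R]

theorem cutIndicator_le_one (S : Finset V) (p : V × V) : (cutIndicator S p : R) ≤ 1 := by
  unfold cutIndicator; split_ifs <;> simp

theorem isSubmodular_cutIndicator (p : V × V) :
    IsSubmodular fun S => (cutIndicator S p : R) := by
  intro S T
  simp only [cutIndicator, mem_union, mem_inter]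
  by_cases h₁ : p.1 ∈ S <;> by_cases h₂ : p.1 ∈ T <;> by_cases h₃ : p.2 ∈ S <;>
    by_cases h₄ : p.2 ∈ T <;> simp [h₁, h₂, h₃, h₄]

theorem isSubmodular_sum_add_cutCapacity {E : Type*} [Fintype E] (e : E → V × V) {c : E → R}
    (hc : 0 ≤ c) (a : V → R) : IsSubmodular fun S => ∑ v ∈ S, a v + cutCapacity e c S := by
  intro S T
  have hcut : cutCapacity e c (S ∪ T) + cutCapacity e c (S ∩ T) ≤
      cutCapacity e c S + cutCapacity e c T := by
    simp only [cutCapacity, ← sum_add_distrib, ← mul_add]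
    exact sum_le_sum fun f _ =>
      mul_le_mul_of_nonneg_left (isSubmodular_cutIndicator (e f) S T) (hc f)
  have hsum : ∑ v ∈ S ∪ T, a v + ∑ v ∈ S ∩ T, a v = ∑ v ∈ S, a v + ∑ v ∈ T, a v :=
    sum_union_inter
  linarith

/-- The bounds are the minima of `ψ` over the sets containing only `p.1` and only `p.2`;
submodularity makes them compatible. -/
theorem IsSubmodular.exists_interval [Finite V] {ψ : Finset V → R} (hψ : IsSubmodular ψ)
    {p : V × V} (hp : p.1 ≠ p.2) (h₀ : ∀ S, (p.1 ∈ S ↔ p.2 ∈ S) → 0 ≤ ψ S) :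
    ∃ L U : R, L ≤ U ∧ ∀ k x : R,
      (∀ S, 0 ≤ ψ S + x * ((if p.1 ∈ S then 1 else 0) - if p.2 ∈ S then 1 else 0) +
        k * cutIndicator S p) ↔ x ∈ Set.Icc (L - k) (U + k) := by
  obtain ⟨A, hA, hAmin⟩ := Set.exists_min_image {S : Finset V | p.1 ∈ S ∧ p.2 ∉ S} ψ
    (Set.toFinite _) ⟨{p.1}, by simp [hp.symm]⟩
  obtain ⟨B, hB, hBmin⟩ := Set.exists_min_image {S : Finset V | p.1 ∉ S ∧ p.2 ∈ S} ψ
    (Set.toFinite _) ⟨{p.2}, by simp [hp]⟩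
  simp only [Set.mem_ofPred_eq] at hA hB hAmin hBmin
  refine ⟨-ψ A, ψ B, ?_, fun k x => ⟨fun h => ?_, fun h S => ?_⟩⟩
  · have hunion := h₀ (A ∪ B) (by simp [hA, hB])
    have hinter := h₀ (A ∩ B) (by simp [hA, hB])
    linarith [hψ A B]
  · have hx := h A
    have hy := h B
    simp only [hA, hB, cutIndicator, if_true, if_false, iff_false, not_true, false_iff] at hx hy
    constructor <;> linarith
  · obtain ⟨hL, hU⟩ := h
    by_cases hi : p.1 ∈ S <;> by_cases hj : p.2 ∈ S
    · simpa [hi, hj, cutIndicator] using h₀ S (by simp [hi, hj])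
    · have := hAmin S ⟨hi, hj⟩
      simp only [hi, hj, cutIndicator, if_true, if_false, iff_false, not_true]
      linarith
    · have := hBmin S ⟨hi, hj⟩
      simp only [hi, hj, cutIndicator, if_true, if_false, false_iff, not_true]
      linarith
    · simpa [hi, hj, cutIndicator] using h₀ S (by simp [hi, hj])

end Submodular

section Flows

variable {V E R : Type*} [DecidableEq V] [Finite V] [Fintype E]
  [CommRing R] [LinearOrder R] [IsStrictOrderedRing R]

theorem exists_interval_cutCondition {e : Option E → V × V} (he : (e none).1 ≠ (e none).2)
    {c : E → R} (hc : 0 ≤ c) {a : V → R}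
    (h : ∀ S : Finset V, ((e none).1 ∈ S ↔ (e none).2 ∈ S) →
      0 ≤ ∑ v ∈ S, a v + cutCapacity (e ∘ some) c S) :
    ∃ L U : R, L ≤ U ∧ ∀ k x : R,
      CutCondition e (Option.elim' k c) (a + x • edgeDiff (e none)) ↔
        x ∈ Set.Icc (L - k) (U + k) := by
  obtain ⟨L, U, hLU, hiff⟩ :=
    (isSubmodular_sum_add_cutCapacity (e ∘ some) hc a).exists_interval he h
  refine ⟨L, U, hLU, fun k x => (forall_congr' fun S => ?_).trans (hiff k x)⟩
  rw [sum_add_smul_edgeDiff, cutCapacity_option, Option.elim'_none, option_elim'_comp_some]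
  ring_nf

theorem CutCondition.exists_route {e : Option E → V × V} {c : Option E → R} (hc : 0 ≤ c)
    {a : V → R} (h : CutCondition e c a) :
    ∃ x, |x| ≤ c none ∧
      CutCondition (e ∘ some) (c ∘ some) (a + x • edgeDiff (e none)) := by
  have hk : 0 ≤ c none := hc none
  by_cases he : (e none).1 = (e none).2
  · refine ⟨0, by simpa using hk, ?_⟩
    rwa [zero_smul, add_zero, ← cutCondition_option_of_loop he]
  obtain ⟨L, U, hLU, hiff⟩ := exists_interval_cutCondition (c := c ∘ some) (a := a) he
    (fun f => hc (some f)) fun S hS => by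
      simpa [cutCapacity_option, cutIndicator, hS] using h S
  have hc_elim : Option.elim' (c none) (c ∘ some) = c := funext (Option.rec rfl fun _ => rfl)
  obtain ⟨hL, hU⟩ := (hiff (c none) 0).1 (by simpa [hc_elim] using h)
  have hroute := (hiff 0 (max L (min 0 U))).2 (by simp [hLU])
  rw [cutCondition_option_of_eq_zero rfl, option_elim'_comp_some] at hroute
  refine ⟨_, abs_le.2 ⟨?_, ?_⟩, hroute⟩
  · exact le_max_of_le_right (le_min (by linarith) (by linarith))
  · exact max_le (by linarith) ((min_le_left _ _).trans hk)

/-- Gale's feasibility theorem: route the flow one edge at a time. -/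
theorem CutCondition.exists_flow {e : E → V × V} {c : E → R} (hc : 0 ≤ c) {a : V → R}
    (h : CutCondition e c a) :
    ∃ g : E → R, (∀ f, |g f| ≤ c f) ∧ 0 ≤ a + ∑ f, g f • edgeDiff (e f) := by
  revert e c a
  refine Fintype.induction_empty_option (P := fun E _ => ∀ {e : E → V × V} {c : E → R}, 0 ≤ c →
    ∀ {a : V → R}, CutCondition e c a →
      ∃ g : E → R, (∀ f, |g f| ≤ c f) ∧ 0 ≤ a + ∑ f, g f • edgeDiff (e f)) ?_ ?_ ?_ E
  · intro E E' _ σ ih e c hc a h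
    let _ := Fintype.ofEquiv E' σ.symm
    obtain ⟨g, hgc, hga⟩ := ih (fun f => hc (σ f)) ((cutCondition_comp_equiv_iff σ).2 h)
    refine ⟨g ∘ σ.symm, fun f => by simpa using hgc (σ.symm f), ?_⟩
    simpa [← σ.sum_comp] using hga
  · intro e c _ a h
    refine ⟨0, isEmptyElim, fun v => ?_⟩
    simpa [cutCapacity] using h {v}
  · intro E _ ih e c hc a h
    obtain ⟨x, hxc, hx⟩ := h.exists_route hc
    obtain ⟨g, hgc, hga⟩ := ih (fun f => hc (some f)) hx
    refine ⟨Option.elim' x g, Option.rec hxc hgc, ?_⟩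
    simpa [Fintype.sum_option, ← add_assoc] using hga

end Flows

/-! ### Lattice points and contraction -/

theorem ncard_eq_sum_ncard_fiber {α β : Type*} {s : Set α} (hs : s.Finite) {T : Finset β}
    {π : α → β} (hπ : ∀ x ∈ s, π x ∈ T) : s.ncard = ∑ y ∈ T, (s ∩ π ⁻¹' {y}).ncard := by
  classical
  lift s to Finset α using hs
  rw [Set.ncard_coe_finset, card_eq_sum_card_fiberwise (f := π) (t := T) hπ]
  refine sum_congr rfl fun y _ => ?_
  rw [← Set.ncard_coe_finset]
  congr 1
  ext x
  simp

theorem cutCapacity_posPart_le_sum_abs {V E : Type*} [DecidableEq V] [Fintype E]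
    (e : E → V × V) (b : E → ℤ) (S : Finset V) : cutCapacity e b⁺ S ≤ ∑ f, |b f| :=
  sum_le_sum fun f _ => calc
    (b f)⁺ * cutIndicator S (e f) ≤ (b f)⁺ :=
      mul_le_of_le_one_right (posPart_nonneg _) (cutIndicator_le_one S (e f))
    _ ≤ |b f| := sup_le (le_abs_self _) (abs_nonneg _)

section ShearedPoints

variable {V E : Type*} [Fintype V] [DecidableEq V] [Fintype E]

/-- The lattice points of the `t`-th dilate of the cosmological polytope, in the coordinates
provided by `shear`. -/
def shearedPoints (e : E → V × V) (t : ℤ) : Set ((V → ℤ) × (E → ℤ)) :=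
  {q | CutCondition e q.2⁺ q.1 ∧ ∑ v, q.1 v + ∑ f, |q.2 f| = t}

variable {e : E → V × V} {t : ℤ} {q : (V → ℤ) × (E → ℤ)}

theorem sum_abs_le_of_mem_shearedPoints (hq : q ∈ shearedPoints e t) : ∑ f, |q.2 f| ≤ t := by
  have hsum := hq.1 univ
  rw [cutCapacity_univ, add_zero] at hsum
  linarith [hq.2]

theorem abs_le_of_mem_shearedPoints (hq : q ∈ shearedPoints e t) (f : E) : |q.2 f| ≤ t :=
  (single_le_sum (f := fun f => |q.2 f|) (fun _ _ => abs_nonneg _) (mem_univ f)).trans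
    (sum_abs_le_of_mem_shearedPoints hq)

theorem neg_le_sum_of_mem_shearedPoints (hq : q ∈ shearedPoints e t) (S : Finset V) :
    -t ≤ ∑ v ∈ S, q.1 v := by
  linarith [hq.1 S, cutCapacity_posPart_le_sum_abs e q.2 S, sum_abs_le_of_mem_shearedPoints hq]

theorem le_two_mul_of_mem_shearedPoints (hq : q ∈ shearedPoints e t) (v : V) :
    q.1 v ≤ 2 * t := by
  have hcompl := neg_le_sum_of_mem_shearedPoints hq (univ.erase v)
  have habs : 0 ≤ ∑ f, |q.2 f| := sum_nonneg fun f _ => abs_nonneg _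
  linarith [hq.2, add_sum_erase univ q.1 (mem_univ v)]

theorem finite_shearedPoints (e : E → V × V) (t : ℤ) : (shearedPoints e t).Finite := by
  classical
  refine (Set.finite_Icc ((fun _ => -t, fun _ => -t) : (V → ℤ) × (E → ℤ))
    (fun _ => 2 * t, fun _ => t)).subset fun q hq => ⟨⟨fun v => ?_, fun f => ?_⟩, ⟨?_, fun f => ?_⟩⟩
  · simpa using neg_le_sum_of_mem_shearedPoints hq {v}
  · exact (abs_le.1 (abs_le_of_mem_shearedPoints hq f)).1
  · exact le_two_mul_of_mem_shearedPoints hq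
  · exact (abs_le.1 (abs_le_of_mem_shearedPoints hq f)).2

theorem ncard_shearedPoints_comp_equiv {E' : Type*} [Fintype E'] (σ : E' ≃ E) (e : E → V × V)
    (t : ℤ) : (shearedPoints (e ∘ σ) t).ncard = (shearedPoints e t).ncard := by
  let τ : (V → ℤ) × (E → ℤ) ≃ (V → ℤ) × (E' → ℤ) :=
    (Equiv.refl _).prodCongr (σ.symm.arrowCongr (Equiv.refl ℤ))
  refine (Set.ncard_congr' (τ.subtypeEquiv fun q => ?_)).symm
  have hcut : CutCondition (e ∘ σ) (q.2⁺ ∘ σ) q.1 ↔ CutCondition e q.2⁺ q.1 :=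
    cutCondition_comp_equiv_iff σ
  have hsum : ∑ f, |q.2 (σ f)| = ∑ f, |q.2 f| := σ.sum_comp fun f => |q.2 f|
  change _ ↔ CutCondition (e ∘ σ) (q.2⁺ ∘ σ) q.1 ∧ ∑ v, q.1 v + ∑ f, |q.2 (σ f)| = t
  rw [hcut, hsum]
  rfl

/-- The analogue of `shearedPoints` for the multigraph with the edge `none` deleted, with the cut
condition relaxed by an additional capacity `k` along that edge. -/
def augmentedPoints (e : Option E → V × V) (k : ℕ) (t : ℤ) : Set ((V → ℤ) × (E → ℤ)) :=
  {q | CutCondition e (Option.elim' (k : ℤ) q.2⁺) q.1 ∧ ∑ v, q.1 v + ∑ f, |q.2 f| = t}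

theorem augmentedPoints_zero (e : Option E → V × V) (t : ℤ) :
    augmentedPoints e 0 t = shearedPoints (e ∘ some) t := by
  ext q
  exact and_congr_left fun _ => cutCondition_option_of_eq_zero rfl

theorem augmentedPoints_of_loop {e : Option E → V × V} (he : (e none).1 = (e none).2) (k : ℕ)
    (t : ℤ) : augmentedPoints e k t = shearedPoints (e ∘ some) t := by
  ext q
  exact and_congr_left fun _ => cutCondition_option_of_loop he

theorem mem_augmentedPoints_iff {e : Option E → V × V} {j t : ℤ} {q : (V → ℤ) × (E → ℤ)} :
    q ∈ augmentedPoints e j.toNat (t - |j|) ↔ (q.1, Option.elim' j q.2) ∈ shearedPoints e t := by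
  have hpos : (Option.elim' j q.2)⁺ = Option.elim' (j.toNat : ℤ) q.2⁺ := by
    ext (_ | f) <;> simp [posPart_def]
  simp only [augmentedPoints, shearedPoints, Set.mem_ofPred_eq, hpos, Fintype.sum_option,
    Option.elim'_none, Option.elim'_some]
  refine and_congr_right fun _ => ?_
  constructor <;> intro h <;> linarith

theorem injective_prodMk_elim' {α β γ : Type*} (y : γ) :
    Function.Injective fun q : α × (β → γ) => (q.1, Option.elim' y q.2) := by
  rintro ⟨a, b⟩ ⟨a', b'⟩ h
  obtain ⟨rfl, h⟩ := Prod.mk.inj h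
  exact congrArg _ (congrArg (· ∘ some) h)

theorem finite_augmentedPoints (e : Option E → V × V) (k : ℕ) (t : ℤ) :
    (augmentedPoints e k t).Finite := by
  refine ((finite_shearedPoints e (t + |(k : ℤ)|)).preimage
    (injective_prodMk_elim' (k : ℤ)).injOn).subset fun q hq => ?_
  simpa [← mem_augmentedPoints_iff] using hq

theorem ncard_shearedPoints_option (e : Option E → V × V) (t : ℤ) :
    (shearedPoints e t).ncard =
      ∑ j ∈ Icc (-t) t, (augmentedPoints e j.toNat (t - |j|)).ncard := by
  rw [ncard_eq_sum_ncard_fiber (finite_shearedPoints e t) (π := fun q => q.2 none)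
    (T := Icc (-t) t) fun q hq => mem_Icc.2 (abs_le.1 (abs_le_of_mem_shearedPoints hq none))]
  refine sum_congr rfl fun j _ => ?_
  rw [← Set.ncard_image_of_injective (augmentedPoints e _ _) (injective_prodMk_elim' j)]
  refine congrArg Set.ncard (Set.ext fun ⟨a, b⟩ => ⟨?_, ?_⟩)
  · rintro ⟨hq, rfl⟩
    have hb : Option.elim' (b none) (b ∘ some) = b := funext (Option.rec rfl fun _ => rfl)
    exact ⟨(a, b ∘ some), mem_augmentedPoints_iff.2 (by rwa [hb]), congrArg (Prod.mk a) hb⟩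
  · rintro ⟨q, hq, h⟩
    rw [← h]
    exact ⟨mem_augmentedPoints_iff.1 hq, rfl⟩

end ShearedPoints

section Contraction

variable {V : Type*} [DecidableEq V] {p : V × V}

/-- The contraction of the non-loop edge `p`, which identifies its second end with the first. -/
def contract (hp : p.1 ≠ p.2) (v : V) : {v : V // v ≠ p.2} :=
  if hv : v = p.2 then ⟨p.1, hp⟩ else ⟨v, hv⟩

theorem contract_snd (hp : p.1 ≠ p.2) : contract hp p.2 = ⟨p.1, hp⟩ :=
  dif_pos rfl

theorem contract_coe (hp : p.1 ≠ p.2) (v : {v : V // v ≠ p.2}) : contract hp v = v :=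
  dif_neg v.2

theorem cutIndicator_map {W R : Type*} [DecidableEq W] [Fintype V] [CommRing R] (π : V → W)
    (S : Finset W) (q : V × V) :
    (cutIndicator S (q.map π π) : R) = cutIndicator {v | π v ∈ S} q := by
  simp [cutIndicator]

theorem sum_linearMap {V W : Type*} [Fintype V] [Finite W] [DecidableEq W] (π : V → W) (a : V → ℤ)
    (S : Finset W) : ∑ w ∈ S, FunOnFinite.linearMap ℤ ℤ π a w = ∑ v with π v ∈ S, a v := by
  simp only [FunOnFinite.linearMap_apply_apply, sum_fiberwise_eq_sum_filter]

theorem filter_contract_mem_eq [Fintype V] (hp : p.1 ≠ p.2) {S : Finset V}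
    (hS : p.1 ∈ S ↔ p.2 ∈ S) :
    ({v | contract hp v ∈ S.subtype (· ≠ p.2)} : Finset V) = S := by
  ext v
  rcases eq_or_ne v p.2 with rfl | hv
  · simp [contract_snd, hS]
  · simp [contract_coe hp ⟨v, hv⟩]

variable [Finite V]

theorem linearMap_contract_apply (hp : p.1 ≠ p.2) (a : V → ℤ) (v : {v : V // v ≠ p.2}) :
    FunOnFinite.linearMap ℤ ℤ (contract hp) a v = a v + if (v : V) = p.1 then a p.2 else 0 := by
  have := Fintype.ofFinite V
  have hsnd : (⟨p.1, hp⟩ : {v : V // v ≠ p.2}) = v ↔ (v : V) = p.1 := by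
    rw [Subtype.ext_iff, eq_comm]
  simp [FunOnFinite.linearMap_apply_apply, sum_filter, Fintype.sum_eq_add_sum_subtype_ne _ p.2,
    contract_snd, contract_coe, hsnd, add_comm]

theorem linearMap_contract_surjective (hp : p.1 ≠ p.2) :
    Function.Surjective (FunOnFinite.linearMap ℤ ℤ (contract hp)) := by
  intro a
  refine ⟨fun v => if hv : v = p.2 then 0 else a ⟨v, hv⟩, ?_⟩
  ext v
  simp [linearMap_contract_apply, v.2]

theorem linearMap_contract_eq_iff (hp : p.1 ≠ p.2) {a a₀ : V → ℤ} :
    FunOnFinite.linearMap ℤ ℤ (contract hp) a = FunOnFinite.linearMap ℤ ℤ (contract hp) a₀ ↔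
      ∃ x : ℤ, a₀ + x • edgeDiff p = a := by
  constructor
  · intro h
    have happ (v : V) (hv : v ≠ p.2) := congrFun h ⟨v, hv⟩
    simp only [linearMap_contract_apply] at happ
    refine ⟨a₀ p.2 - a p.2, funext fun v => ?_⟩
    rcases eq_or_ne v p.2 with rfl | hv₂
    · simp [edgeDiff, hp.symm]
    rcases eq_or_ne v p.1 with rfl | hv₁
    · have hsum : a p.1 + a p.2 = a₀ p.1 + a₀ p.2 := by simpa using happ p.1 hp
      rw [eq_sub_of_add_eq hsum]
      simp [edgeDiff, hp, add_sub_assoc]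
    · simpa [edgeDiff, hv₁, hv₂] using (happ v hv₂).symm
  · rintro ⟨x, rfl⟩
    rw [map_add, map_smul, edgeDiff, map_sub, FunOnFinite.linearMap_piSingle,
      FunOnFinite.linearMap_piSingle, contract_snd, contract_coe hp ⟨p.1, hp⟩, sub_self, smul_zero,
      add_zero]

variable {E : Type*} [Fintype E]

theorem cutCondition_contract_iff (hp : p.1 ≠ p.2) {e : E → V × V} {c : E → ℤ} {a : V → ℤ} :
    CutCondition (fun f => (e f).map (contract hp) (contract hp)) c
        (FunOnFinite.linearMap ℤ ℤ (contract hp) a) ↔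
      ∀ S : Finset V, (p.1 ∈ S ↔ p.2 ∈ S) → 0 ≤ ∑ v ∈ S, a v + cutCapacity e c S := by
  have := Fintype.ofFinite V
  have hcut (S : Finset {v : V // v ≠ p.2}) :
      cutCapacity (fun f => (e f).map (contract hp) (contract hp)) c S =
        cutCapacity e c {v | contract hp v ∈ S} := by
    simp only [cutCapacity, cutIndicator_map]
  simp only [CutCondition, sum_linearMap, hcut]
  refine ⟨fun h S hS => ?_, fun h S => h _ ?_⟩
  · simpa only [filter_contract_mem_eq hp hS] using h (S.subtype (· ≠ p.2))
  · simp [contract_snd, contract_coe hp ⟨p.1, hp⟩]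

end Contraction

/-! ### The fibers of a contraction -/

section DeletionContraction

variable {V E : Type*} [Fintype V] [DecidableEq V] [Fintype E] {e : Option E → V × V}

/-- The multigraph obtained by contracting the edge `none`. -/
def contractNone (e : Option E → V × V) (he : (e none).1 ≠ (e none).2) (f : E) :
    {v : V // v ≠ (e none).2} × {v : V // v ≠ (e none).2} :=
  (e (some f)).map (contract he) (contract he)

/-- The pushforward of the vertex weights along the contraction of the edge `none`. -/
noncomputable def contractPoint (he : (e none).1 ≠ (e none).2) (q : (V → ℤ) × (E → ℤ)) :
    ({v : V // v ≠ (e none).2} → ℤ) × (E → ℤ) :=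
  q.map (FunOnFinite.linearMap ℤ ℤ (contract he)) id

theorem contractPoint_mem_shearedPoints_iff (he : (e none).1 ≠ (e none).2) {t : ℤ}
    {q : (V → ℤ) × (E → ℤ)} :
    contractPoint he q ∈ shearedPoints (contractNone e he) t ↔
      (∀ S : Finset V, ((e none).1 ∈ S ↔ (e none).2 ∈ S) →
        0 ≤ ∑ v ∈ S, q.1 v + cutCapacity (e ∘ some) q.2⁺ S) ∧
      ∑ v, q.1 v + ∑ f, |q.2 f| = t := by
  have hsum : ∑ w, FunOnFinite.linearMap ℤ ℤ (contract he) q.1 w = ∑ v, q.1 v := by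
    simp [sum_linearMap]
  rw [← cutCondition_contract_iff he, ← hsum]
  rfl

theorem contractPoint_mem_of_mem_augmentedPoints (he : (e none).1 ≠ (e none).2) {k : ℕ} {t : ℤ}
    {q : (V → ℤ) × (E → ℤ)} (hq : q ∈ augmentedPoints e k t) :
    contractPoint he q ∈ shearedPoints (contractNone e he) t := by
  refine (contractPoint_mem_shearedPoints_iff he).2 ⟨fun S hS => ?_, hq.2⟩
  simpa [cutCapacity_option, cutIndicator, hS, option_elim'_comp_some] using hq.1 S

theorem augmentedPoints_inter_preimage_contractPoint (he : (e none).1 ≠ (e none).2) (k : ℕ) {t : ℤ}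
    {a : V → ℤ} {b : E → ℤ} (ht : ∑ v, a v + ∑ f, |b f| = t) :
    augmentedPoints e k t ∩ contractPoint he ⁻¹' {contractPoint he (a, b)} =
      (fun x : ℤ => (a + x • edgeDiff (e none), b)) ''
        {x | CutCondition e (Option.elim' (k : ℤ) b⁺) (a + x • edgeDiff (e none))} := by
  have hfiber {a' : V → ℤ} {b' : E → ℤ} : contractPoint he (a', b') = contractPoint he (a, b) ↔
      (∃ x : ℤ, a + x • edgeDiff (e none) = a') ∧ b' = b :=
    Prod.mk_inj.trans (and_congr_left fun _ => linearMap_contract_eq_iff he)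
  refine Set.ext fun ⟨a', b'⟩ => ⟨?_, ?_⟩
  · rintro ⟨hq, hfib⟩
    obtain ⟨⟨x, rfl⟩, rfl⟩ := hfiber.1 hfib
    exact ⟨x, hq.1, rfl⟩
  · rintro ⟨x, hx, h⟩
    obtain ⟨rfl, rfl⟩ := Prod.mk.inj h
    refine ⟨⟨hx, ?_⟩, hfiber.2 ⟨⟨x, rfl⟩, rfl⟩⟩
    simpa only [sum_add_smul_edgeDiff, mem_univ, if_true, sub_self, mul_zero, add_zero] using ht

theorem exists_ncard_fiber_contractPoint (he : (e none).1 ≠ (e none).2) {t : ℤ}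
    {q' : ({v : V // v ≠ (e none).2} → ℤ) × (E → ℤ)}
    (hq' : q' ∈ shearedPoints (contractNone e he) t) :
    ∃ n : ℕ, ∀ k : ℕ, (augmentedPoints e k t ∩ contractPoint he ⁻¹' {q'}).ncard = n + 2 * k := by
  obtain ⟨⟨a, b⟩, rfl⟩ : ∃ q, contractPoint he q = q' :=
    (linearMap_contract_surjective he).prodMap Function.surjective_id q'
  obtain ⟨hcut, hsum⟩ := (contractPoint_mem_shearedPoints_iff he).1 hq'
  obtain ⟨L, U, hLU, hiff⟩ := exists_interval_cutCondition he (posPart_nonneg b) hcut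
  have hinj : Function.Injective fun x : ℤ => (a + x • edgeDiff (e none), b) := fun x y hxy => by
    simpa [edgeDiff, he] using congrFun (congrArg Prod.fst hxy) (e none).1
  refine ⟨(U + 1 - L).toNat, fun k => ?_⟩
  simp only [augmentedPoints_inter_preimage_contractPoint he k hsum, hiff, Set.ofPred_mem_eq,
    Set.ncard_image_of_injective _ hinj, ← coe_Icc, Set.ncard_coe_finset, Int.card_Icc]
  lia

/-- Each fibre of the contraction is an interval of lattice points, which gains one point at either
end for each additional unit of capacity. -/
theorem ncard_augmentedPoints (he : (e none).1 ≠ (e none).2) (k : ℕ) (t : ℤ) :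
    (augmentedPoints e k t).ncard =
      (shearedPoints (e ∘ some) t).ncard +
        2 * k * (shearedPoints (contractNone e he) t).ncard := by
  have hsum (k : ℕ) := ncard_eq_sum_ncard_fiber (finite_augmentedPoints e k t)
    (T := (finite_shearedPoints (contractNone e he) t).toFinset) fun q hq =>
      (Set.Finite.mem_toFinset _).2 (contractPoint_mem_of_mem_augmentedPoints he hq)
  rw [← augmentedPoints_zero, hsum k, hsum 0,
    Set.ncard_eq_toFinset_card _ (finite_shearedPoints _ t), mul_comm, ← smul_eq_mul,
    ← sum_const, ← sum_add_distrib]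
  refine sum_congr rfl fun q' hq' => ?_
  obtain ⟨n, hn⟩ := exists_ncard_fiber_contractPoint he ((Set.Finite.mem_toFinset _).1 hq')
  rw [hn, hn, mul_zero, add_zero]

end DeletionContraction

/-! ### Generating functions -/

section Slicing

theorem sum_Icc_neg_eq_add_sum_range {M : Type*} [AddCommGroup M] (f : ℤ → M) (t : ℕ) :
    ∑ j ∈ Icc (-t : ℤ) t, f j = f 0 + ∑ m ∈ range t, (f (m + 1) + f (-(m + 1))) := by
  induction t with
  | zero => simp
  | succ t ih =>
    rw [Nat.cast_succ, sum_Icc_succ_eq_add_endpoints, ih, sum_range_succ]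
    abel

/-- The generating function `1 + 2z + 2z² + ⋯` of the integers by absolute value. -/
noncomputable def absSeries : PowerSeries ℚ :=
  1 + (2 : ℚ) • (PowerSeries.X * PowerSeries.mk 1)

/-- The generating function `2z + 4z² + 6z³ + ⋯` of twice the positive part of the integers, by
absolute value. -/
noncomputable def posPartSeries : PowerSeries ℚ :=
  (2 : ℚ) • (PowerSeries.X * PowerSeries.mk 1 ^ 2)

theorem absSeries_mul_one_sub :
    absSeries * (1 - PowerSeries.X) = 1 + PowerSeries.X := by
  rw [absSeries, add_mul, smul_mul_assoc, mul_assoc, PowerSeries.mk_one_mul_one_sub_eq_one,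
    two_smul]
  ring

theorem posPartSeries_mul_one_sub_sq :
    posPartSeries * (1 - PowerSeries.X) ^ 2 = 2 * PowerSeries.X := by
  rw [posPartSeries, smul_mul_assoc, mul_assoc, ← mul_pow, PowerSeries.mk_one_mul_one_sub_eq_one,
    two_smul]
  ring

theorem coeff_succ_absSeries (m : ℕ) : PowerSeries.coeff (m + 1) absSeries = 2 := by
  simp [absSeries, PowerSeries.coeff_succ_X_mul, PowerSeries.coeff_one]

theorem coeff_succ_posPartSeries (m : ℕ) :
    PowerSeries.coeff (m + 1) posPartSeries = 2 * (m + 1) := by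
  simp [posPartSeries, PowerSeries.coeff_succ_X_mul, PowerSeries.mk_one_pow_eq_mk_choose_add,
    add_comm]

theorem coeff_mul_eq_add_sum_range {R : Type*} [CommRing R] (P A : PowerSeries R) (t : ℕ) :
    PowerSeries.coeff t (P * A) = PowerSeries.constantCoeff P * PowerSeries.coeff t A +
      ∑ m ∈ range t, PowerSeries.coeff (m + 1) P * PowerSeries.coeff (t - (m + 1)) A := by
  rw [PowerSeries.coeff_mul, Nat.sum_antidiagonal_eq_sum_range_succ_mk, sum_range_succ', add_comm]
  simp

theorem sum_Icc_neg_coeff_sub_natAbs (A B : PowerSeries ℚ) (t : ℕ) :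
    ∑ j ∈ Icc (-t : ℤ) t, (PowerSeries.coeff (t - j.natAbs) A +
        2 * j.toNat * PowerSeries.coeff (t - j.natAbs) B) =
      PowerSeries.coeff t (absSeries * A + posPartSeries * B) := by
  have hneg (m : ℕ) : (-(m + 1 : ℤ)).toNat = 0 := by lia
  have hpos (m : ℕ) : (m + 1 : ℤ).toNat = m + 1 := by lia
  have habs (m : ℕ) : (m + 1 : ℤ).natAbs = m + 1 := by lia
  rw [sum_Icc_neg_eq_add_sum_range, map_add, coeff_mul_eq_add_sum_range,
    coeff_mul_eq_add_sum_range, add_add_add_comm, ← sum_add_distrib]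
  congr 1
  · simp [absSeries, posPartSeries]
  refine sum_congr rfl fun m _ => ?_
  rw [coeff_succ_absSeries, coeff_succ_posPartSeries, Int.natAbs_neg, habs, hneg, hpos]
  push_cast
  ring

end Slicing

section HStarSeries

variable {V E : Type*} [Fintype V] [DecidableEq V] [Fintype E]

/-- The generating function of the numbers of sheared lattice points. -/
noncomputable def countSeries (e : E → V × V) : PowerSeries ℚ :=
  PowerSeries.mk fun t => ((shearedPoints e t).ncard : ℚ)

theorem ncard_shearedPoints_sub_abs (e : E → V × V) {t : ℕ} {j : ℤ} (hj : j ∈ Icc (-t : ℤ) t) :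
    ((shearedPoints e (t - |j|)).ncard : ℚ) =
      PowerSeries.coeff (t - j.natAbs) (countSeries e) := by
  have hle : j.natAbs ≤ t := by rw [mem_Icc] at hj; lia
  rw [countSeries, PowerSeries.coeff_mk, Nat.cast_sub hle, Int.natCast_natAbs]

theorem countSeries_option_of_loop {e : Option E → V × V} (he : (e none).1 = (e none).2) :
    countSeries e = absSeries * countSeries (e ∘ some) := by
  ext t
  have h := sum_Icc_neg_coeff_sub_natAbs (countSeries (e ∘ some)) 0 t
  simp only [map_zero, mul_zero, add_zero] at h
  rw [← h, countSeries, PowerSeries.coeff_mk, ncard_shearedPoints_option, Nat.cast_sum]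
  exact sum_congr rfl fun j hj => by
    rw [augmentedPoints_of_loop he, ncard_shearedPoints_sub_abs _ hj]

theorem countSeries_option_of_ne {e : Option E → V × V} (he : (e none).1 ≠ (e none).2) :
    countSeries e = absSeries * countSeries (e ∘ some) +
      posPartSeries * countSeries (contractNone e he) := by
  ext t
  rw [← sum_Icc_neg_coeff_sub_natAbs, countSeries, PowerSeries.coeff_mk,
    ncard_shearedPoints_option, Nat.cast_sum]
  exact sum_congr rfl fun j hj => by
    rw [ncard_augmentedPoints he, ← ncard_shearedPoints_sub_abs _ hj,
      ← ncard_shearedPoints_sub_abs _ hj]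
    push_cast
    rfl

theorem shearedPoints_of_isEmpty [IsEmpty E] (e : E → V × V) (t : ℕ) :
    shearedPoints e t = (fun l : V →₀ ℕ => ((fun v => (l v : ℤ)), isEmptyElim)) ''
      (finsuppAntidiag univ t : Finset (V →₀ ℕ)) := by
  ext ⟨a, b⟩
  have hcut : CutCondition e b⁺ a ↔ ∀ v, 0 ≤ a v := by
    simp only [CutCondition, cutCapacity, univ_eq_empty, sum_empty, add_zero]
    exact ⟨fun h v => by simpa using h {v}, fun h S => sum_nonneg fun v _ => h v⟩
  simp only [shearedPoints, hcut, Set.mem_ofPred_eq, Set.mem_image, mem_coe, mem_finsuppAntidiag,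
    univ_eq_empty, sum_empty, add_zero, Prod.mk.injEq, eq_iff_true_of_subsingleton, and_true,
    subset_univ]
  constructor
  · rintro ⟨ha, hsum⟩
    refine ⟨Finsupp.equivFunOnFinite.symm fun v => (a v).toNat, ?_, funext fun v => by simp [ha]⟩
    zify
    simp [ha, hsum]
  · rintro ⟨l, hsum, rfl⟩
    exact ⟨fun v => Nat.cast_nonneg _, by rw [← hsum]; exact (Nat.cast_sum _ _).symm⟩

theorem countSeries_of_isEmpty [IsEmpty E] (e : E → V × V) :
    countSeries e = PowerSeries.mk 1 ^ Fintype.card V := by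
  have hinj : Function.Injective fun l : V →₀ ℕ =>
      ((fun v => (l v : ℤ), isEmptyElim) : (V → ℤ) × (E → ℤ)) := fun l l' hl =>
    Finsupp.ext fun v => Nat.cast_injective (congrFun (congrArg Prod.fst hl) v)
  ext t
  rw [← card_univ, ← prod_const, PowerSeries.coeff_prod, countSeries, PowerSeries.coeff_mk,
    shearedPoints_of_isEmpty, Set.ncard_image_of_injective _ hinj, Set.ncard_coe_finset]
  simp

/-- The numerator of `countSeries`, which is the `h*`-polynomial as a power series. -/
noncomputable def hStarSeries (e : E → V × V) : PowerSeries ℚ :=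
  countSeries e * (1 - PowerSeries.X) ^ (Fintype.card V + Fintype.card E)

theorem hStarSeries_comp_equiv {E' : Type*} [Fintype E'] (σ : E' ≃ E) (e : E → V × V) :
    hStarSeries (e ∘ σ) = hStarSeries e := by
  simp only [hStarSeries, countSeries, ncard_shearedPoints_comp_equiv, Fintype.card_congr σ]

theorem hStarSeries_of_isEmpty [IsEmpty E] (e : E → V × V) : hStarSeries e = 1 := by
  rw [hStarSeries, countSeries_of_isEmpty, Fintype.card_eq_zero (α := E), add_zero, ← mul_pow,
    PowerSeries.mk_one_mul_one_sub_eq_one, one_pow]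

theorem hStarSeries_option_of_loop {e : Option E → V × V} (he : (e none).1 = (e none).2) :
    hStarSeries e = (1 + PowerSeries.X) * hStarSeries (e ∘ some) := by
  rw [hStarSeries, hStarSeries, countSeries_option_of_loop he, Fintype.card_option,
    ← absSeries_mul_one_sub]
  ring

theorem hStarSeries_option_of_ne {e : Option E → V × V} (he : (e none).1 ≠ (e none).2) :
    hStarSeries e = (1 + PowerSeries.X) * hStarSeries (e ∘ some) +
      2 * PowerSeries.X * hStarSeries (contractNone e he) := by
  have hcard : Fintype.card V = Fintype.card {v // v ≠ (e none).2} + 1 := by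
    have := Fintype.card_pos_iff.2 ⟨(e none).1⟩
    rw [Fintype.card_subtype_compl, Fintype.card_subtype_eq]
    lia
  rw [hStarSeries, hStarSeries, hStarSeries, countSeries_option_of_ne he, Fintype.card_option,
    hcard, ← absSeries_mul_one_sub, ← posPartSeries_mul_one_sub_sq]
  ring

end HStarSeries

section Coefficients

variable {V E : Type*} [Fintype V] [DecidableEq V] [Fintype E]

/-- Deletion-contraction induction on the edges. -/
theorem hStarSeries_induction {P : ℕ → PowerSeries ℚ → Prop} (one : P 0 1)
    (loop : ∀ n A, P n A → P (n + 1) ((1 + PowerSeries.X) * A))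
    (nonloop : ∀ n A B, P n A → P n B →
      P (n + 1) ((1 + PowerSeries.X) * A + 2 * PowerSeries.X * B)) (e : E → V × V) :
    P (Fintype.card E) (hStarSeries e) := by
  revert V
  refine Fintype.induction_empty_option (P := fun E _ => ∀ {V} [Fintype V] [DecidableEq V]
    (e : E → V × V), P (Fintype.card E) (hStarSeries e)) ?_ ?_ ?_ E
  · intro E E' _ σ ih V _ _ e
    let _ := Fintype.ofEquiv E' σ.symm
    rw [← hStarSeries_comp_equiv σ, ← Fintype.card_congr σ]
    exact ih (e ∘ σ)
  · intro V _ _ e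
    rwa [hStarSeries_of_isEmpty, Fintype.card_pempty]
  · intro E _ ih V _ _ e
    rw [Fintype.card_option]
    by_cases he : (e none).1 = (e none).2
    · rw [hStarSeries_option_of_loop he]
      exact loop _ _ (ih _)
    · rw [hStarSeries_option_of_ne he]
      exact nonloop _ _ _ (ih _) (ih _)

theorem constantCoeff_hStarSeries (e : E → V × V) :
    PowerSeries.constantCoeff (hStarSeries e) = 1 :=
  hStarSeries_induction (P := fun _ A => PowerSeries.constantCoeff A = 1) (by simp)
    (by simp +contextual) (by simp +contextual) e

theorem coeff_succ_one_add_X_mul (A : PowerSeries ℚ) (n : ℕ) :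
    PowerSeries.coeff (n + 1) ((1 + PowerSeries.X) * A) =
      PowerSeries.coeff (n + 1) A + PowerSeries.coeff n A := by
  rw [add_mul, one_mul, map_add, PowerSeries.coeff_succ_X_mul]

theorem coeff_succ_two_mul_X_mul (A : PowerSeries ℚ) (n : ℕ) :
    PowerSeries.coeff (n + 1) (2 * PowerSeries.X * A) = 2 * PowerSeries.coeff n A := by
  rw [mul_assoc, two_mul, map_add, PowerSeries.coeff_succ_X_mul, two_mul]

theorem hStarSeries_coeff_nonneg_and_one_le_coeff_card (e : E → V × V) :
    (∀ n, 0 ≤ PowerSeries.coeff n (hStarSeries e)) ∧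
      1 ≤ PowerSeries.coeff (Fintype.card E) (hStarSeries e) := by
  refine hStarSeries_induction (P := fun n A => (∀ n, 0 ≤ PowerSeries.coeff n A) ∧
    1 ≤ PowerSeries.coeff n A) ?_ ?_ ?_ e
  · refine ⟨fun n => ?_, by simp⟩
    rw [PowerSeries.coeff_one]
    split_ifs <;> simp
  · rintro n A ⟨hA, hAn⟩
    refine ⟨Nat.and_forall_add_one.1 ⟨by simpa using hA 0, fun m => ?_⟩, ?_⟩ <;>
      rw [coeff_succ_one_add_X_mul]
    · exact add_nonneg (hA (m + 1)) (hA m)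
    · linarith [hA (n + 1)]
  · rintro n A B ⟨hA, hAn⟩ ⟨hB, hBn⟩
    refine ⟨Nat.and_forall_add_one.1 ⟨by simpa using hA 0, fun m => ?_⟩, ?_⟩ <;>
      rw [map_add, coeff_succ_one_add_X_mul, coeff_succ_two_mul_X_mul]
    · linarith [hA m, hA (m + 1), hB m]
    · linarith [hA (n + 1)]

theorem hStarSeries_of_forall_loop {e : E → V × V} (he : ∀ f, (e f).1 = (e f).2) :
    hStarSeries e = (1 + PowerSeries.X) ^ Fintype.card E := by
  revert e
  refine Fintype.induction_empty_option (P := fun E _ => ∀ {e : E → V × V},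
    (∀ f, (e f).1 = (e f).2) → hStarSeries e = (1 + PowerSeries.X) ^ Fintype.card E) ?_ ?_ ?_ E
  · intro E E' _ σ ih e he
    let _ := Fintype.ofEquiv E' σ.symm
    rw [← hStarSeries_comp_equiv σ, ← Fintype.card_congr σ, ih (e := e ∘ σ) fun f => he (σ f)]
  · intro e _
    rw [hStarSeries_of_isEmpty, Fintype.card_pempty, pow_zero]
  · intro E _ ih e he
    rw [hStarSeries_option_of_loop (he none), ih (e := e ∘ some) fun f => he (some f),
      Fintype.card_option, pow_succ']

theorem one_lt_coeff_card_hStarSeries {e : E → V × V} {f : E} (hf : (e f).1 ≠ (e f).2) :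
    1 < PowerSeries.coeff (Fintype.card E) (hStarSeries e) := by
  classical
  let σ : Option {f' // f' ≠ f} ≃ E := Equiv.optionSubtypeNe f
  rw [← hStarSeries_comp_equiv σ, ← Fintype.card_congr σ, Fintype.card_option,
    hStarSeries_option_of_ne (e := e ∘ σ) hf, map_add, coeff_succ_one_add_X_mul,
    coeff_succ_two_mul_X_mul]
  obtain ⟨hdel, hdel_top⟩ := hStarSeries_coeff_nonneg_and_one_le_coeff_card ((e ∘ σ) ∘ some)
  have hcon_top := (hStarSeries_coeff_nonneg_and_one_le_coeff_card (contractNone (e ∘ σ) hf)).2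
  linarith [hdel (Fintype.card {f' // f' ≠ f} + 1)]

end Coefficients

/-! ### The cone over the cosmological polytope -/

section Cones

variable {W : Type*} [AddCommGroup W] [Module ℝ W] {s : Set W} {l : W →ₗ[ℝ] ℝ} {y : W}

theorem nonneg_of_mem_hull (hl : ∀ x ∈ s, 0 ≤ l x) (hy : y ∈ PointedCone.hull ℝ s) : 0 ≤ l y :=
  (Submodule.span_le (p := (PointedCone.positive ℝ ℝ).comap l)).2 hl hy

theorem mem_smul_convexHull_of_mem_hull (hs : s.Nonempty) (hl : ∀ x ∈ s, l x = 1)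
    (hy : y ∈ PointedCone.hull ℝ s) : y ∈ l y • convexHull ℝ s := by
  have hl₀ : ∀ x ∈ s, 0 ≤ l x := fun x hx => (hl x hx).symm ▸ zero_le_one
  induction hy using Submodule.span_induction with
  | mem x hx => simpa [hl x hx] using subset_convexHull ℝ s hx
  | zero => simp [Set.zero_smul_set (hs.convexHull (𝕜 := ℝ))]
  | add x y hx hy ihx ihy =>
    rw [map_add, (convex_convexHull ℝ s).add_smul (nonneg_of_mem_hull hl₀ hx)
      (nonneg_of_mem_hull hl₀ hy)]
    exact Set.add_mem_add ihx ihy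
  | smul r x _ ih =>
    rw [Nonneg.mk_smul, map_smul, smul_eq_mul, mul_smul]
    exact Set.smul_mem_smul_set ih

theorem mem_smul_convexHull_iff (hs : s.Nonempty) (hl : ∀ x ∈ s, l x = 1) {t : ℝ} (ht : 0 ≤ t) :
    y ∈ t • convexHull ℝ s ↔ y ∈ PointedCone.hull ℝ s ∧ l y = t := by
  refine ⟨?_, fun ⟨hy, hly⟩ => hly ▸ mem_smul_convexHull_of_mem_hull hs hl hy⟩
  rintro ⟨x, hx, rfl⟩
  have hcone : x ∈ PointedCone.hull ℝ s :=
    convexHull_min PointedCone.subset_hull (PointedCone.convex _) hx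
  have hlx : l x = 1 := convexHull_min hl ((convex_singleton (1 : ℝ)).linear_preimage l) hx
  exact ⟨PointedCone.smul_mem _ ht hcone, by simp [hlx]⟩

end Cones

section Shear

variable {V E R : Type*} [DecidableEq V] [CommRing R]

/-- The vector `e_i + e_j` of the endpoints of the oriented edge `p = (i, j)`. -/
def edgeSum (p : V × V) : V → R :=
  Pi.single p.1 1 + Pi.single p.2 1

theorem sum_edgeSum (S : Finset V) (p : V × V) :
    ∑ v ∈ S, (edgeSum p v : R) = (if p.1 ∈ S then 1 else 0) + if p.2 ∈ S then 1 else 0 := by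
  simp [edgeSum, sum_add_distrib]

theorem abs_sum_edgeDiff [LinearOrder R] [IsStrictOrderedRing R] (S : Finset V) (p : V × V) :
    |∑ v ∈ S, (edgeDiff p v : R)| = cutIndicator S p := by
  rw [sum_edgeDiff]
  by_cases h₁ : p.1 ∈ S <;> by_cases h₂ : p.2 ∈ S <;> simp [h₁, h₂, cutIndicator]

theorem cutIndicator_le_sum_edgeSum [LinearOrder R] [IsStrictOrderedRing R] (S : Finset V)
    (p : V × V) : (cutIndicator S p : R) ≤ ∑ v ∈ S, edgeSum p v := by
  rw [sum_edgeSum]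
  by_cases h₁ : p.1 ∈ S <;> by_cases h₂ : p.2 ∈ S <;>
    simp [h₁, h₂, cutIndicator]

variable [Fintype E] [LinearOrder R]

/-- The piecewise linear coordinate change trading the negative part of each edge coordinate for
copies of the vertex `e_i + e_j - e_f` of the cosmological polytope. -/
def shear (e : E → V × V) : (V ⊕ E → R) ≃ (V → R) × (E → R) where
  toFun y := (y ∘ Sum.inl - ∑ f, (y (Sum.inr f))⁻ • edgeSum (e f), y ∘ Sum.inr)
  invFun q := Sum.elim (q.1 + ∑ f, (q.2 f)⁻ • edgeSum (e f)) q.2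
  left_inv y := by ext (v | f) <;> simp
  right_inv q := by ext <;> simp

theorem sum_shear_fst (e : E → V × V) (y : V ⊕ E → R) (S : Finset V) :
    ∑ v ∈ S, (shear e y).1 v =
      ∑ v ∈ S, y (Sum.inl v) - ∑ f, (y (Sum.inr f))⁻ * ∑ v ∈ S, edgeSum (e f) v := by
  simp only [shear, Equiv.coe_fn_mk, Pi.sub_apply, Function.comp_apply, sum_sub_distrib,
    Finset.sum_apply, Pi.smul_apply, smul_eq_mul, mul_sum]
  rw [sum_comm]

theorem sum_shear_fst_add_sum_abs_shear_snd [Fintype V] [IsStrictOrderedRing R] (e : E → V × V)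
    (y : V ⊕ E → R) : ∑ v, (shear e y).1 v + ∑ f, |(shear e y).2 f| = ∑ k, y k := by
  have hf : ∀ x : R, |x| = x + x⁻ * 2 := fun x => by
    linear_combination posPart_sub_negPart x - posPart_add_negPart x
  rw [sum_shear_fst]
  simp only [sum_edgeSum, mem_univ, if_true, shear, Equiv.coe_fn_mk, Function.comp_apply, hf,
    sum_add_distrib, Fintype.sum_sum_type, one_add_one_eq_two]
  ring

theorem cutCondition_intCast_iff {e : E → V × V} {c : E → ℤ} {a : V → ℤ} :
    CutCondition e (fun f => (c f : ℝ)) (fun v => (a v : ℝ)) ↔ CutCondition e c a := by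
  simp only [CutCondition, cutCapacity, cutIndicator]
  exact_mod_cast Iff.rfl

theorem cutCondition_shear_intCast_iff {e : E → V × V} {x : V ⊕ E → ℤ} :
    CutCondition e (shear e fun k => (x k : ℝ)).2⁺ (shear e fun k => (x k : ℝ)).1 ↔
      CutCondition e (shear e x).2⁺ (shear e x).1 := by
  rw [← cutCondition_intCast_iff]
  have hfst : (shear e fun k => (x k : ℝ)).1 = fun v => ((shear e x).1 v : ℝ) := by
    ext v
    simp [shear, edgeSum, Pi.single_apply, negPart_def]
  have hsnd : (shear e fun k => (x k : ℝ)).2⁺ = fun f => (((shear e x).2⁺ f : ℤ) : ℝ) := by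
    ext f
    simp [shear, posPart_def]
  rw [hfst, hsnd]

end Shear

section Cone

variable {V E : Type*} [DecidableEq V] [DecidableEq E]

theorem mem_cosmoVertices_iff {e : E → V × V} {x : V ⊕ E → ℝ} :
    x ∈ cosmoVertices (fun f => s((e f).1, (e f).2)) ↔ ∃ f,
      x = Sum.elim (edgeSum (e f)) (-Pi.single f 1) ∨
      x = Sum.elim (edgeDiff (e f)) (Pi.single f 1) ∨
      x = Sum.elim (-edgeDiff (e f)) (Pi.single f 1) := by
  have hA : ∀ i j (f : E), (Pi.single (Sum.inl i) 1 + Pi.single (Sum.inl j) 1 -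
      Pi.single (Sum.inr f) 1 : V ⊕ E → ℝ) = Sum.elim (edgeSum (i, j)) (-Pi.single f 1) := by
    intro i j f
    ext (v | f') <;> simp [edgeSum, Pi.single_apply]
  have hB : ∀ i j (f : E), (Pi.single (Sum.inl i) 1 - Pi.single (Sum.inl j) 1 +
      Pi.single (Sum.inr f) 1 : V ⊕ E → ℝ) = Sum.elim (edgeDiff (i, j)) (Pi.single f 1) := by
    intro i j f
    ext (v | f') <;> simp [edgeDiff, Pi.single_apply]
  have hC : ∀ i j (f : E), (-Pi.single (Sum.inl i) 1 + Pi.single (Sum.inl j) 1 +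
      Pi.single (Sum.inr f) 1 : V ⊕ E → ℝ) = Sum.elim (-edgeDiff (i, j)) (Pi.single f 1) := by
    intro i j f
    ext (v | f') <;> simp [edgeDiff, Pi.single_apply, neg_add_eq_sub]
  have hsum : ∀ i j : V, (edgeSum (j, i) : V → ℝ) = edgeSum (i, j) := fun i j => add_comm _ _
  have hdiff : ∀ i j : V, (edgeDiff (j, i) : V → ℝ) = -edgeDiff (i, j) := fun i j =>
    (neg_sub _ _).symm
  simp only [cosmoVertices, hA, hB, hC, Set.mem_ofPred_eq, Sym2.eq_iff]
  constructor
  · rintro ⟨f, i, j, ⟨rfl, rfl⟩ | ⟨rfl, rfl⟩, h⟩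
    · exact ⟨f, h⟩
    · refine ⟨f, ?_⟩
      rw [hsum, hdiff, neg_neg] at h
      tauto
  · rintro ⟨f, h⟩
    exact ⟨f, _, _, Or.inl ⟨rfl, rfl⟩, h⟩

theorem sum_eq_one_of_mem_cosmoVertices [Fintype V] [Fintype E] {e : E → V × V} {x : V ⊕ E → ℝ}
    (hx : x ∈ cosmoVertices fun f => s((e f).1, (e f).2)) : ∑ k, x k = 1 := by
  have hsum : ∀ p : V × V, ∑ v, (edgeSum p v : ℝ) = 2 := fun p => by
    rw [sum_edgeSum]; norm_num
  have hdiff : ∀ p : V × V, ∑ v, (edgeDiff p v : ℝ) = 0 := fun p => by simp [sum_edgeDiff]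
  obtain ⟨f, rfl | rfl | rfl⟩ := mem_cosmoVertices_iff.1 hx <;>
    norm_num [Fintype.sum_sum_type, hsum, hdiff]

/-- The inequality indexed by `S` is linear on each orthant of the edge coordinates, where it
has the weights `w`. -/
theorem cutCondition_shear_of_mem_hull [Fintype E] {e : E → V × V} {y : V ⊕ E → ℝ}
    (hy : y ∈ PointedCone.hull ℝ (cosmoVertices fun f => s((e f).1, (e f).2))) :
    CutCondition e (shear e y).2⁺ (shear e y).1 := by
  intro S
  let w : E → ℝ := fun f =>
    if y (Sum.inr f) ≤ 0 then ∑ v ∈ S, edgeSum (e f) v else cutIndicator S (e f)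
  have hw : ∀ f, cutIndicator S (e f) ≤ w f ∧ w f ≤ ∑ v ∈ S, edgeSum (e f) v := fun f => by
    have := cutIndicator_le_sum_edgeSum (R := ℝ) S (e f)
    simp only [w]
    split_ifs <;> simp [this]
  let l : (V ⊕ E → ℝ) →ₗ[ℝ] ℝ := ∑ v ∈ S, LinearMap.proj (Sum.inl v) +
    ∑ f, w f • LinearMap.proj (Sum.inr f)
  have hl : ∀ x, l x = ∑ v ∈ S, x (Sum.inl v) + ∑ f, w f * x (Sum.inr f) := fun x => by simp [l]
  have hvert : ∀ x ∈ cosmoVertices fun f => s((e f).1, (e f).2), 0 ≤ l x := by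
    intro x hx
    obtain ⟨f, hf⟩ := mem_cosmoVertices_iff.1 hx
    have habs := abs_le.1 (abs_sum_edgeDiff (R := ℝ) S (e f)).le
    obtain rfl | rfl | rfl := hf <;>
      simp only [hl, Sum.elim_inl, Sum.elim_inr, Pi.neg_apply, Pi.single_apply, sum_neg_distrib,
        mul_neg, mul_ite, mul_one, mul_zero, sum_ite_eq', mem_univ, if_true] <;>
      linarith [hw f]
  have hterm : ∀ f, w f * y (Sum.inr f) = (y (Sum.inr f))⁺ * cutIndicator S (e f) -
      (y (Sum.inr f))⁻ * ∑ v ∈ S, edgeSum (e f) v := fun f => by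
    by_cases h₀ : y (Sum.inr f) ≤ 0
    · simp [w, h₀, posPart_of_nonpos, negPart_of_nonpos, mul_comm]
    · simp [w, h₀, posPart_of_nonneg, negPart_of_nonneg, (not_le.1 h₀).le, mul_comm]
  have hnonneg := nonneg_of_mem_hull hvert hy
  simp only [hl, hterm, sum_sub_distrib] at hnonneg
  have hcut : cutCapacity e (shear e y).2⁺ S = ∑ f, (y (Sum.inr f))⁺ * cutIndicator S (e f) := rfl
  rw [sum_shear_fst, hcut]
  linarith

theorem edge_mem_hull {e : E → V × V} (f : E) {x g : ℝ} (hg : |g| ≤ x⁺) :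
    Sum.elim (x⁻ • edgeSum (e f) - g • edgeDiff (e f)) (Pi.single f x) ∈
      PointedCone.hull ℝ (cosmoVertices fun f => s((e f).1, (e f).2)) := by
  set C := PointedCone.hull ℝ (cosmoVertices fun f => s((e f).1, (e f).2))
  have hA : Sum.elim (edgeSum (e f)) (-Pi.single f 1) ∈ C :=
    PointedCone.subset_hull (mem_cosmoVertices_iff.2 ⟨f, Or.inl rfl⟩)
  have hB : Sum.elim (edgeDiff (e f)) (Pi.single f 1) ∈ C :=
    PointedCone.subset_hull (mem_cosmoVertices_iff.2 ⟨f, Or.inr (Or.inl rfl)⟩)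
  have hC : Sum.elim (-edgeDiff (e f)) (Pi.single f 1) ∈ C :=
    PointedCone.subset_hull (mem_cosmoVertices_iff.2 ⟨f, Or.inr (Or.inr rfl)⟩)
  obtain ⟨hg₁, hg₂⟩ := abs_le.1 hg
  have hmem := C.add_mem (C.add_mem (PointedCone.smul_mem C (negPart_nonneg x) hA)
    (PointedCone.smul_mem C (r := (x⁺ - g) / 2) (by linarith) hB))
    (PointedCone.smul_mem C (r := (x⁺ + g) / 2) (by linarith) hC)
  convert hmem using 1
  ext (v | f')
  · simp only [Sum.elim_inl, Pi.add_apply, Pi.sub_apply, Pi.smul_apply, Pi.neg_apply, smul_eq_mul]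
    ring
  · simp only [Sum.elim_inr, Pi.add_apply, Pi.smul_apply, Pi.neg_apply, smul_eq_mul,
      Pi.single_apply]
    split_ifs
    · linear_combination -posPart_sub_negPart x
    · ring

theorem vertex_mem_hull {e : E → V × V} (hiso : ∀ v, ∃ f, v ∈ s((e f).1, (e f).2)) (v : V) :
    Sum.elim (Pi.single v 1) 0 ∈
      PointedCone.hull ℝ (cosmoVertices fun f => s((e f).1, (e f).2)) := by
  set C := PointedCone.hull ℝ (cosmoVertices fun f => s((e f).1, (e f).2))
  obtain ⟨f, j, hj⟩ := hiso v
  have h₁ : (Pi.single (Sum.inl v) 1 + Pi.single (Sum.inl j) 1 - Pi.single (Sum.inr f) 1) ∈ C :=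
    PointedCone.subset_hull ⟨f, v, j, hj, Or.inl rfl⟩
  have h₂ : (Pi.single (Sum.inl v) 1 - Pi.single (Sum.inl j) 1 + Pi.single (Sum.inr f) 1) ∈ C :=
    PointedCone.subset_hull ⟨f, v, j, hj, Or.inr (Or.inl rfl)⟩
  have hsingle : Sum.elim (Pi.single v 1) 0 = (Pi.single (Sum.inl v) 1 : V ⊕ E → ℝ) := by
    ext (u | f') <;> simp [Pi.single_apply]
  convert PointedCone.smul_mem C (r := 1 / 2) (by norm_num) (C.add_mem h₁ h₂) using 1
  rw [hsingle]
  module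

theorem mem_hull_of_cutCondition_shear [Finite V] [Fintype E] {e : E → V × V}
    (hiso : ∀ v, ∃ f, v ∈ s((e f).1, (e f).2)) {y : V ⊕ E → ℝ}
    (hy : CutCondition e (shear e y).2⁺ (shear e y).1) :
    y ∈ PointedCone.hull ℝ (cosmoVertices fun f => s((e f).1, (e f).2)) := by
  cases nonempty_fintype V
  obtain ⟨g, hg, hp⟩ := hy.exists_flow (posPart_nonneg _)
  set p := (shear e y).1 + ∑ f, g f • edgeDiff (e f) with hp_def
  have hdecomp : y = ∑ v, p v • Sum.elim (Pi.single v 1) 0 + ∑ f, Sum.elim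
      ((y (Sum.inr f))⁻ • edgeSum (e f) - g f • edgeDiff (e f)) (Pi.single f (y (Sum.inr f))) := by
    ext (v | f)
    · simp [hp_def, shear, Pi.single_apply]
    · simp [Pi.single_apply]
  rw [hdecomp]
  exact add_mem (sum_mem fun v _ => PointedCone.smul_mem _ (hp v) (vertex_mem_hull hiso v))
    (sum_mem fun f _ => edge_mem_hull f (hg f))

variable [Fintype V] [Fintype E]

theorem mem_smul_cosmoPolytope_iff [Nonempty V] {e : E → V × V}
    (hiso : ∀ v, ∃ f, v ∈ s((e f).1, (e f).2)) {y : V ⊕ E → ℝ} {t : ℝ} (ht : 0 ≤ t) :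
    y ∈ t • cosmoPolytope (fun f => s((e f).1, (e f).2)) ↔
      CutCondition e (shear e y).2⁺ (shear e y).1 ∧ ∑ k, y k = t := by
  obtain ⟨f, -⟩ := hiso (Classical.arbitrary V)
  have hsum : ∀ x ∈ cosmoVertices fun f => s((e f).1, (e f).2),
      (∑ k, LinearMap.proj k : (V ⊕ E → ℝ) →ₗ[ℝ] ℝ) x = 1 := fun x hx => by
    simpa using sum_eq_one_of_mem_cosmoVertices hx
  rw [cosmoPolytope, mem_smul_convexHull_iff ⟨_, mem_cosmoVertices_iff.2 ⟨f, Or.inl rfl⟩⟩ hsum ht]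
  exact and_congr ⟨cutCondition_shear_of_mem_hull, mem_hull_of_cutCondition_shear hiso⟩ (by simp)

theorem latticePointCount_cosmoPolytope [Nonempty V] {e : E → V × V}
    (hiso : ∀ v, ∃ f, v ∈ s((e f).1, (e f).2)) (t : ℕ) :
    latticePointCount (cosmoPolytope fun f => s((e f).1, (e f).2)) t =
      (shearedPoints e t).ncard := by
  have hpre : {x : V ⊕ E → ℤ |
      (fun k => (x k : ℝ)) ∈ (t : ℝ) • cosmoPolytope fun f => s((e f).1, (e f).2)} =
        shear e ⁻¹' shearedPoints e t := by
    ext x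
    rw [Set.mem_ofPred_eq, mem_smul_cosmoPolytope_iff hiso t.cast_nonneg,
      cutCondition_shear_intCast_iff, Set.mem_preimage, shearedPoints, Set.mem_ofPred_eq,
      sum_shear_fst_add_sum_abs_shear_snd]
    norm_cast
  rw [latticePointCount, hpre]
  exact Set.ncard_preimage_of_injective_subset_range (shear e).injective (by simp)

theorem ehrhartSeries_cosmoPolytope [Nonempty V] {e : E → V × V}
    (hiso : ∀ v, ∃ f, v ∈ s((e f).1, (e f).2)) :
    ehrhartSeries (cosmoPolytope fun f => s((e f).1, (e f).2)) = countSeries e := by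
  ext t
  rcases eq_or_ne t 0 with rfl | ht
  · simpa [hStarSeries, ehrhartSeries] using (constantCoeff_hStarSeries e).symm
  · simp [ehrhartSeries, countSeries, ht, latticePointCount_cosmoPolytope hiso]

theorem coe_eq_hStarSeries_of_isHStarPoly [Nonempty V] {e : E → V × V}
    (hiso : ∀ v, ∃ f, v ∈ s((e f).1, (e f).2)) {h : ℚ[X]}
    (hh : IsHStarPoly (cosmoPolytope fun f => s((e f).1, (e f).2))
      (Fintype.card V + Fintype.card E - 1) h) : (h : PowerSeries ℚ) = hStarSeries e := by
  have hcard : 1 ≤ Fintype.card V + Fintype.card E := Fintype.card_pos.trans_le le_self_add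
  rw [← hh, ehrhartSeries_cosmoPolytope hiso, Nat.sub_add_cancel hcard, hStarSeries]

theorem exists_orientation {V E : Type*} (ends : E → Sym2 V) :
    ∃ e : E → V × V, ends = fun f => s((e f).1, (e f).2) := by
  choose e he using fun f => Quot.exists_rep (ends f)
  exact ⟨e, funext fun f => (he f).symm⟩

end Cone

end CosmologicalPolytope

/-- The `h*`-polynomial of `C_G` is palindromic, i.e.
`h*_i(C_G) = h*_{|E|−i}(C_G)` for all `0 ≤ i ≤ |E|` (equivalently, `C_G` is Gorenstein),
if and only if every edge of `G` is a loop. -/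
theorem hstar_palindromic_iff_all_loops
    {V E : Type*} [Fintype V] [Fintype E] [DecidableEq V] [DecidableEq E]
    (ends : E → Sym2 V) (hiso : ∀ v : V, ∃ f : E, v ∈ ends f)
    (h : Polynomial ℚ)
    (hh : IsHStarPoly (cosmoPolytope ends) (Fintype.card V + Fintype.card E - 1) h) :
    (∀ i ≤ Fintype.card E, h.coeff i = h.coeff (Fintype.card E - i)) ↔
      ∀ f : E, (ends f).IsDiag := by
  obtain ⟨e, rfl⟩ := CosmologicalPolytope.exists_orientation ends
  rcases isEmpty_or_nonempty V with hV | hV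
  · have : IsEmpty E := ⟨fun f => hV.elim (e f).1⟩
    simp
  have hcoe := CosmologicalPolytope.coe_eq_hStarSeries_of_isHStarPoly hiso hh
  simp only [Sym2.mk_isDiag_iff]
  constructor
  · intro hpal
    by_contra! ⟨f, hf⟩
    have htop : 1 < h.coeff (Fintype.card E) := by
      simpa [← hcoe] using CosmologicalPolytope.one_lt_coeff_card_hStarSeries hf
    have hzero : h.coeff 0 = 1 := by
      simpa [← hcoe] using CosmologicalPolytope.constantCoeff_hStarSeries e
    exact htop.ne (hzero.symm.trans (hpal 0 (Nat.zero_le _)))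
  · intro hloop i hi
    have hpow : h = (1 + X) ^ Fintype.card E := Polynomial.coe_injective ℚ (by
      simpa [hcoe] using CosmologicalPolytope.hStarSeries_of_forall_loop hloop)
    rw [hpow, Polynomial.coeff_one_add_X_pow, Polynomial.coeff_one_add_X_pow, Nat.choose_symm hi]
end

section
/- Let n ≥ 3 and let a = (a_1, …, a_n) ∈ ℤ^n with a_i ≥ 1 for all i. Then the h*-polynomial of the cosmological polytope of the multicycle C_a is h*(C_{C_a}; z) = ∏_{i=1}^n ((1+z)^{a_i} + 2 a_i z (1+z)^{a_i−1}) − ∏_{i=1}^n 2 a_i z (1+z)^{a_i−1}. -/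
open Polynomial Pointwise

/-- The endpoint map of the multicycle `C_a` on vertex set `ZMod n`: for each vertex `i`
there are `a i` parallel edges between `i` and `i + 1`. -/
def multicycleEnds (n : ℕ) (a : ZMod n → ℕ) : (Σ i : ZMod n, Fin (a i)) → Sym2 (ZMod n) :=
  fun p => s(p.1, p.1 + 1)

/-!
Call the `a v` parallel edges between `v` and its successor the class of `v`. A lattice point of the
`t`-th dilate of the polytope amounts to the following data for every class: the edge coordinates
`y`, and the number `c` of half-edge units that the first end of the class supplies towards its
demand, twice the sum of the positive parts of `y`. Different `c` can give the same lattice point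
only by a common shift around the cycle, and they are made unique by asking for the largest ones,
i.e. by asking that some class be saturated: its first end supplies the whole demand.

With the right weight on the classes, the Ehrhart series is therefore the product of the generating
functions of all class states minus the product of the generating functions of the unsaturated ones.
The saturated states of a class of `a` edges are counted by `∑ z ^ |y| / (1 - z)` over `y ∈ ℤ ^ a`;
the unsaturated ones are pairs `c < demand y`, and as `demand y + demand (-y) = 2 |y|` these are
counted by `z` times the derivative of `∑ z ^ |y|`.
-/

/-! ### Counting series -/

section CountingSeries

open scoped PowerSeries

variable {A B : Type*} {w : A → ℕ} {w' : B → ℕ}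

/-- The weight `w` takes every value finitely often, so that counting by weight makes sense. -/
def FiniteFibers (w : A → ℕ) : Prop :=
  ∀ t, Finite {x // w x = t}

/-- The generating function of `A` by the weight `w`: its `t`-th coefficient is the number of
elements of weight `t`, read as `0` when there are infinitely many. -/
noncomputable def countingSeries (R : Type*) [Semiring R] (w : A → ℕ) : R⟦X⟧ :=
  PowerSeries.mk fun t => (Nat.card {x // w x = t} : R)

section Semiring

variable (R : Type*) [Semiring R]

theorem coeff_countingSeries (w : A → ℕ) (t : ℕ) :
    PowerSeries.coeff t (countingSeries R w) = (Nat.card {x // w x = t} : R) :=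
  PowerSeries.coeff_mk t _

theorem FiniteFibers.comp_injective (hw : FiniteFibers w) {f : B → A}
    (hf : Function.Injective f) : FiniteFibers (w ∘ f) := fun t =>
  have := hw t
  Finite.of_injective (fun x : {x // (w ∘ f) x = t} => (⟨f x, x.2⟩ : {x // w x = t}))
    fun _ _ h => Subtype.ext (hf (congrArg Subtype.val h))

theorem countingSeries_comp_equiv (w : A → ℕ) (e : B ≃ A) :
    countingSeries R (w ∘ e) = countingSeries R w := by
  ext t
  simp only [coeff_countingSeries, Function.comp_apply]
  rw [Nat.card_congr (e.subtypeEquiv (p := fun x => w (e x) = t) (q := fun x => w x = t)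
    fun _ => Iff.rfl)]

theorem countingSeries_id : countingSeries R (id : ℕ → ℕ) = PowerSeries.mk 1 := by
  ext t
  simp [coeff_countingSeries]

theorem finiteFibers_id : FiniteFibers (id : ℕ → ℕ) := fun t =>
  inferInstanceAs (Finite {x // x = t})

theorem coe_insert_neg_eq_natAbs_fiber (t : ℕ) :
    (({(t : ℤ), -(t : ℤ)} : Finset ℤ) : Set ℤ) = {x | x.natAbs = t} := by
  ext x
  simp [Int.natAbs_eq_iff]

theorem finiteFibers_natAbs : FiniteFibers Int.natAbs := fun t =>
  ((Finset.finite_toSet _).subset (coe_insert_neg_eq_natAbs_fiber t).ge).to_subtype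

theorem countingSeries_natAbs :
    countingSeries R Int.natAbs = (1 + PowerSeries.X) * PowerSeries.mk 1 := by
  ext t
  have hcard : Nat.card {x : ℤ // x.natAbs = t} = ({(t : ℤ), -(t : ℤ)} : Finset ℤ).card := by
    rw [← Set.ncard_coe_finset, coe_insert_neg_eq_natAbs_fiber]
    rfl
  rw [coeff_countingSeries, hcard, add_mul, one_mul, map_add]
  rcases t with _ | t
  · simp
  · rw [Finset.card_pair (by lia), PowerSeries.coeff_succ_X_mul]
    simp [one_add_one_eq_two]

/-- An element of `A × B` of weight `t` is a splitting `t = k + l` together with an element of `A`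
of weight `k` and an element of `B` of weight `l`. -/
def prodFiberEquiv (w : A → ℕ) (w' : B → ℕ) (t : ℕ) :
    {x : A × B // w x.1 + w' x.2 = t} ≃
      Σ l : Finset.HasAntidiagonal.antidiagonal t, {a // w a = l.1.1} × {b // w' b = l.1.2} where
  toFun x := ⟨⟨(w x.1.1, w' x.1.2), Finset.HasAntidiagonal.mem_antidiagonal.2 x.2⟩,
    ⟨x.1.1, rfl⟩, ⟨x.1.2, rfl⟩⟩
  invFun z := ⟨(z.2.1, z.2.2), by
    rw [z.2.1.2, z.2.2.2, Finset.HasAntidiagonal.mem_antidiagonal.1 z.1.2]⟩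
  left_inv _ := rfl
  right_inv := by
    rintro ⟨⟨⟨k, l⟩, _⟩, ⟨a, ha⟩, ⟨b, hb⟩⟩
    dsimp only at ha hb
    subst ha hb
    rfl

theorem FiniteFibers.prod (hw : FiniteFibers w) (hw' : FiniteFibers w') :
    FiniteFibers fun x : A × B => w x.1 + w' x.2 := fun t =>
  have (k : ℕ) : Finite {a // w a = k} := hw k
  have (k : ℕ) : Finite {b // w' b = k} := hw' k
  .of_equiv _ (prodFiberEquiv w w' t).symm

theorem countingSeries_prod (hw : FiniteFibers w) (hw' : FiniteFibers w') :
    countingSeries R (fun x : A × B => w x.1 + w' x.2) =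
      countingSeries R w * countingSeries R w' := by
  have (k : ℕ) : Finite {a // w a = k} := hw k
  have (k : ℕ) : Finite {b // w' b = k} := hw' k
  ext t
  rw [PowerSeries.coeff_mul, coeff_countingSeries, Nat.card_congr (prodFiberEquiv w w' t),
    Nat.card_sigma, ← Finset.sum_coe_sort (Finset.HasAntidiagonal.antidiagonal t)]
  simp [coeff_countingSeries, Nat.card_prod]

/-- An element of weight `t` either satisfies `p` or does not. -/
def subtypeFiberEquiv (w : A → ℕ) (p : A → Prop) [DecidablePred p] (t : ℕ) :
    {x : {x // p x} // w x = t} ⊕ {x : {x // ¬p x} // w x = t} ≃ {x // w x = t} :=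
  Equiv.subtypeSum.symm.trans <|
    (Equiv.sumCompl p).subtypeEquiv (p := fun x => w (Equiv.sumCompl p x) = t) fun _ => Iff.rfl

theorem FiniteFibers.of_subtype (p : A → Prop) (h : FiniteFibers fun x : {x // p x} => w x)
    (h' : FiniteFibers fun x : {x // ¬p x} => w x) : FiniteFibers w := by
  classical
  intro t
  have := h t
  have := h' t
  exact .of_equiv _ (subtypeFiberEquiv w p t)

theorem countingSeries_add_countingSeries_not (hw : FiniteFibers w) (p : A → Prop) :
    countingSeries R (fun x : {x // p x} => w x) +
      countingSeries R (fun x : {x // ¬p x} => w x) = countingSeries R w := by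
  classical
  ext t
  have (q : A → Prop) : Finite {x : {x // q x} // w x = t} :=
    hw.comp_injective Subtype.val_injective t
  simp only [map_add, coeff_countingSeries]
  rw [← Nat.card_congr (subtypeFiberEquiv w p t), Nat.card_sum, Nat.cast_add]

end Semiring

section CommSemiring

variable (R : Type*) [CommSemiring R] {ι : Type*} [Fintype ι] {C : ι → Type*} {u : ∀ i, C i → ℕ}

/-- A family `x` of total weight `t` amounts to the distribution `i ↦ u i (x i)` of `t` together
with one element of the prescribed weight for each index. -/
noncomputable def piFiberEquiv [DecidableEq ι] (u : ∀ i, C i → ℕ) (t : ℕ) :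
    (Σ l : Finset.finsuppAntidiag (Finset.univ : Finset ι) t, ∀ i, {a // u i a = l.1 i}) ≃
      {x : ∀ i, C i // ∑ i, u i (x i) = t} :=
  .ofBijective
    (fun z => ⟨fun i => z.2 i, by
      simpa only [(z.2 _).2] using (Finset.mem_finsuppAntidiag.1 z.1.2).1⟩) <| by
    constructor
    · rintro ⟨⟨l, hl⟩, x⟩ ⟨⟨l', hl'⟩, x'⟩ h
      have hx (i : ι) : (x i : C i) = x' i := congrFun (congrArg Subtype.val h) i
      obtain rfl : l = l' := Finsupp.ext fun i => by rw [← (x i).2, ← (x' i).2, hx]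
      obtain rfl : x = x' := funext fun i => Subtype.ext (hx i)
      rfl
    · rintro ⟨x, hx⟩
      exact ⟨⟨⟨Finsupp.equivFunOnFinite.symm fun i => u i (x i),
        Finset.mem_finsuppAntidiag.2 ⟨by simpa using hx, Finset.subset_univ _⟩⟩,
        fun i => ⟨x i, rfl⟩⟩, rfl⟩

theorem FiniteFibers.pi (hu : ∀ i, FiniteFibers (u i)) :
    FiniteFibers fun x : ∀ i, C i => ∑ i, u i (x i) := by
  classical
  intro t
  have (i : ι) (k : ℕ) : Finite {a // u i a = k} := hu i k
  exact .of_equiv _ (piFiberEquiv u t)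

theorem countingSeries_pi (hu : ∀ i, FiniteFibers (u i)) :
    countingSeries R (fun x : ∀ i, C i => ∑ i, u i (x i)) = ∏ i, countingSeries R (u i) := by
  classical
  have (i : ι) (k : ℕ) : Finite {a // u i a = k} := hu i k
  ext t
  rw [PowerSeries.coeff_prod, coeff_countingSeries, ← Nat.card_congr (piFiberEquiv u t),
    Nat.card_sigma, ← Finset.sum_coe_sort (Finset.finsuppAntidiag _ _)]
  simp [coeff_countingSeries, Nat.card_pi]

end CommSemiring

theorem countingSeries_pi_exists (R : Type*) [CommRing R] {ι : Type*} [Fintype ι]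
    {C : ι → Type*} {u : ∀ i, C i → ℕ} (hu : ∀ i, FiniteFibers (u i)) (p : ∀ i, C i → Prop) :
    countingSeries R (fun x : {x : ∀ i, C i // ∃ i, p i (x i)} => ∑ i, u i (x.1 i)) =
      ∏ i, countingSeries R (u i) -
        ∏ i, countingSeries R (fun x : {x : C i // ¬p i x} => u i x) := by
  let e : {x : ∀ i, C i // ¬∃ i, p i (x i)} ≃ ∀ i, {x : C i // ¬p i x} :=
    (Equiv.subtypeEquivRight fun _ => not_exists).trans
      (Equiv.subtypePiEquivPi (p := fun i x => ¬p i x))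
  rw [← countingSeries_pi R hu,
    ← countingSeries_pi R (u := fun i (x : {x // ¬p i x}) => u i x) fun i =>
      (hu i).comp_injective Subtype.val_injective,
    ← countingSeries_comp_equiv R _ e,
    ← countingSeries_add_countingSeries_not R (.pi hu) fun x => ∃ i, p i (x i),
    eq_sub_iff_add_eq]
  rfl

/-- The elements of weight `t` below the graph of `D`, in the form of pairs of an element of weight
`t` and a height. -/
def subgraphFiberEquiv (w D : A → ℕ) (t : ℕ) :
    {s : {s : A × ℕ // s.2 < D s.1} // w s.1.1 = t} ≃ Σ x : {x // w x = t}, Fin (D x) where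
  toFun s := ⟨⟨s.1.1.1, s.2⟩, ⟨s.1.1.2, s.1.2⟩⟩
  invFun z := ⟨⟨(z.1, z.2), z.2.2⟩, z.1.2⟩

theorem FiniteFibers.subgraph (hw : FiniteFibers w) (D : A → ℕ) :
    FiniteFibers fun s : {s : A × ℕ // s.2 < D s.1} => w s.1.1 := fun t =>
  have := hw t
  .of_equiv _ (subgraphFiberEquiv w D t).symm

theorem sum_eq_mul_card_of_add_perm_eq_two_mul {F : Type*} [Fintype F] {D : F → ℕ}
    (σ : Equiv.Perm F) {t : ℕ} (hD : ∀ x, D x + D (σ x) = 2 * t) :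
    ∑ x, D x = t * Fintype.card F := by
  have h : ∑ x, D x + ∑ x, D (σ x) = 2 * t * Fintype.card F := by
    simp [← Finset.sum_add_distrib, hD, mul_comm]
  rw [Equiv.sum_comp σ D] at h
  linarith

theorem countingSeries_subgraph (R : Type*) [CommSemiring R] (hw : FiniteFibers w) {D : A → ℕ}
    {σ : Equiv.Perm A} (hσ : ∀ x, w (σ x) = w x) (hD : ∀ x, D x + D (σ x) = 2 * w x) :
    countingSeries R (fun s : {s : A × ℕ // s.2 < D s.1} => w s.1.1) =
      PowerSeries.X * PowerSeries.derivative R (countingSeries R w) := by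
  ext t
  have := hw t
  have := Fintype.ofFinite {x // w x = t}
  have hcard : Nat.card {s : {s : A × ℕ // s.2 < D s.1} // w s.1.1 = t} =
      t * Nat.card {x // w x = t} := by
    rw [Nat.card_congr (subgraphFiberEquiv w D t), Nat.card_sigma, Nat.card_eq_fintype_card]
    simp only [Nat.card_fin]
    exact sum_eq_mul_card_of_add_perm_eq_two_mul
      (σ.subtypePerm (p := fun x => w x = t) fun x => by rw [hσ]) fun x => by
        simpa only [Equiv.Perm.subtypePerm_apply, x.2] using hD x
  rw [coeff_countingSeries, hcard]
  rcases t with _ | t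
  · simp
  · rw [PowerSeries.coeff_succ_X_mul, PowerSeries.coeff_derivative, coeff_countingSeries,
      Nat.cast_mul, Nat.cast_succ, mul_comm]

end CountingSeries

/-! ### One class of parallel edges -/

section ClassState

variable {κ : Type*} [Fintype κ]

/-- The `ℓ¹`-norm of an integer vector. -/
def absSum (y : κ → ℤ) : ℕ :=
  ∑ j, (y j).natAbs

/-- Twice the sum of the positive parts of `y`: the number of half-edge units which the two ends of
a class of parallel edges have to supply together when the `j`-th edge has coordinate `y j`. -/
def demand (y : κ → ℤ) : ℕ :=
  ∑ j, 2 * (y j).toNat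

variable (κ) in
/-- The data carried by one class of parallel edges: the edge coordinates `y` and the number `c` of
half-edge units supplied by the first end of the class. -/
abbrev ClassState : Type _ :=
  (κ → ℤ) × ℕ

/-- The first end alone supplies the whole demand of the class. -/
def ClassState.IsSaturated (q : ClassState κ) : Prop :=
  demand q.1 ≤ q.2

/-- The contribution of a class to the total degree; the subtraction is truncated. -/
def ClassState.weight (q : ClassState κ) : ℕ :=
  absSum q.1 + (q.2 - demand q.1)

theorem demand_add_demand_neg (y : κ → ℤ) : demand y + demand (-y) = 2 * absSum y := by
  simp only [demand, absSum, ← Finset.sum_add_distrib, Finset.mul_sum]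
  exact Finset.sum_congr rfl fun j _ => by rw [Pi.neg_apply]; lia

theorem absSum_neg (y : κ → ℤ) : absSum (-y) = absSum y := by
  simp [absSum]

theorem demand_eq_absSum_add_sum (y : κ → ℤ) : (demand y : ℤ) = absSum y + ∑ j, y j := by
  simp only [demand, absSum, Nat.cast_sum, ← Finset.sum_add_distrib]
  exact Finset.sum_congr rfl fun j _ => by lia

theorem finiteFibers_absSum : FiniteFibers (absSum : (κ → ℤ) → ℕ) :=
  .pi fun _ => finiteFibers_natAbs

variable (κ) in
theorem countingSeries_absSum (R : Type*) [CommSemiring R] :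
    countingSeries R (absSum : (κ → ℤ) → ℕ) =
      ((1 + PowerSeries.X) * PowerSeries.mk 1) ^ Fintype.card κ := by
  refine (countingSeries_pi R (u := fun _ : κ => Int.natAbs) fun _ =>
    finiteFibers_natAbs).trans ?_
  rw [countingSeries_natAbs, Finset.prod_const, Finset.card_univ]

theorem derivative_one_add_X_mul_mk_one (R : Type*) [CommRing R] :
    PowerSeries.derivative R ((1 + PowerSeries.X) * PowerSeries.mk 1) =
      2 * PowerSeries.mk 1 ^ 2 := by
  have h : (PowerSeries.mk 1 * (1 - PowerSeries.X) : PowerSeries R) = 1 :=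
    PowerSeries.mk_one_mul_one_sub_eq_one R
  have hmk : PowerSeries.derivative R (PowerSeries.mk 1) = PowerSeries.mk 1 ^ 2 := by
    have h' := congrArg (PowerSeries.derivative R) h
    simp only [Derivation.leibniz, map_sub, PowerSeries.derivative_X, Derivation.map_one_eq_zero,
      smul_eq_mul] at h'
    linear_combination -PowerSeries.derivative R (PowerSeries.mk 1) * h + PowerSeries.mk 1 * h'
  simp only [Derivation.leibniz, map_add, PowerSeries.derivative_X, Derivation.map_one_eq_zero,
    smul_eq_mul, hmk]
  linear_combination (-PowerSeries.mk 1) * h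

namespace ClassState

variable (κ) in
/-- A saturated class state is the same as its edge coordinates and the excess `c - demand y`. -/
def saturatedEquiv : {q : ClassState κ // q.IsSaturated} ≃ (κ → ℤ) × ℕ where
  toFun q := (q.1.1, q.1.2 - demand q.1.1)
  invFun z := ⟨(z.1, demand z.1 + z.2), Nat.le_add_right _ _⟩
  left_inv q := Subtype.ext (Prod.ext rfl (Nat.add_sub_of_le q.2))
  right_inv _ := Prod.ext rfl (Nat.add_sub_cancel_left ..)

variable (κ) in
/-- An unsaturated class state is a point below the graph of `demand`. -/
def unsaturatedEquiv :
    {q : ClassState κ // ¬q.IsSaturated} ≃ {s : (κ → ℤ) × ℕ // s.2 < demand s.1} :=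
  Equiv.subtypeEquivRight fun _ => not_le

theorem weight_eq_absSum_comp_unsaturatedEquiv :
    (fun q : {q : ClassState κ // ¬q.IsSaturated} => weight q.1) =
      (fun s : {s : (κ → ℤ) × ℕ // s.2 < demand s.1} => absSum s.1.1) ∘ unsaturatedEquiv κ := by
  ext ⟨q, hq⟩
  rw [weight, Nat.sub_eq_zero_of_le (not_le.1 hq).le]
  rfl

theorem finiteFibers_weight : FiniteFibers (weight : ClassState κ → ℕ) := by
  refine .of_subtype IsSaturated ?_ ?_
  · exact (finiteFibers_absSum.prod finiteFibers_id).comp_injective (saturatedEquiv κ).injective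
  · rw [weight_eq_absSum_comp_unsaturatedEquiv]
    exact (finiteFibers_absSum.subgraph demand).comp_injective (unsaturatedEquiv κ).injective

variable (κ) in
theorem countingSeries_saturated (R : Type*) [CommSemiring R] :
    countingSeries R (fun q : {q : ClassState κ // q.IsSaturated} => weight q.1) =
      ((1 + PowerSeries.X) * PowerSeries.mk 1) ^ Fintype.card κ * PowerSeries.mk 1 := by
  rw [← countingSeries_absSum, ← countingSeries_id,
    ← countingSeries_prod R finiteFibers_absSum finiteFibers_id,
    ← countingSeries_comp_equiv R _ (saturatedEquiv κ)]
  rfl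

variable (κ) in
theorem countingSeries_unsaturated (R : Type*) [CommSemiring R] :
    countingSeries R (fun q : {q : ClassState κ // ¬q.IsSaturated} => weight q.1) =
      PowerSeries.X *
        PowerSeries.derivative R (((1 + PowerSeries.X) * PowerSeries.mk 1) ^ Fintype.card κ) := by
  rw [weight_eq_absSum_comp_unsaturatedEquiv, countingSeries_comp_equiv,
    countingSeries_subgraph R finiteFibers_absSum (σ := Equiv.neg _) absSum_neg
      demand_add_demand_neg, countingSeries_absSum]

variable (κ) in
theorem countingSeries_saturated_mul (R : Type*) [CommRing R] :
    countingSeries R (fun q : {q : ClassState κ // q.IsSaturated} => weight q.1) *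
        (1 - PowerSeries.X) ^ (Fintype.card κ + 1) =
      (1 + PowerSeries.X) ^ Fintype.card κ := by
  have h : (PowerSeries.mk 1 * (1 - PowerSeries.X) : PowerSeries R) = 1 :=
    PowerSeries.mk_one_mul_one_sub_eq_one R
  rw [countingSeries_saturated, pow_succ, mul_mul_mul_comm, ← mul_pow, mul_assoc (1 + _), h,
    mul_one, mul_one]

variable (κ) in
theorem countingSeries_unsaturated_mul (R : Type*) [CommRing R] :
    countingSeries R (fun q : {q : ClassState κ // ¬q.IsSaturated} => weight q.1) *
        (1 - PowerSeries.X) ^ (Fintype.card κ + 1) =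
      2 * (Fintype.card κ : PowerSeries R) * PowerSeries.X *
        (1 + PowerSeries.X) ^ (Fintype.card κ - 1) := by
  have h : (PowerSeries.mk 1 * (1 - PowerSeries.X) : PowerSeries R) = 1 :=
    PowerSeries.mk_one_mul_one_sub_eq_one R
  rw [countingSeries_unsaturated, PowerSeries.derivative_pow, derivative_one_add_X_mul_mk_one]
  rcases Fintype.card κ with _ | m
  · simp
  · rw [Nat.add_sub_cancel]
    calc _ = 2 * ((m + 1 : ℕ) : PowerSeries R) * PowerSeries.X * (1 + PowerSeries.X) ^ m *
          (PowerSeries.mk 1 * (1 - PowerSeries.X)) ^ (m + 2) := by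
          rw [mul_pow, mul_pow]; ring
      _ = _ := by rw [h, one_pow, mul_one]

variable (κ) in
theorem countingSeries_weight_mul (R : Type*) [CommRing R] :
    countingSeries R (weight : ClassState κ → ℕ) *
        (1 - PowerSeries.X) ^ (Fintype.card κ + 1) =
      (1 + PowerSeries.X) ^ Fintype.card κ +
        2 * (Fintype.card κ : PowerSeries R) * PowerSeries.X *
          (1 + PowerSeries.X) ^ (Fintype.card κ - 1) := by
  rw [← countingSeries_add_countingSeries_not R finiteFibers_weight IsSaturated, add_mul,
    countingSeries_saturated_mul, countingSeries_unsaturated_mul]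

end ClassState

end ClassState

/-! ### Supplying demands along a permutation -/

section Routing

variable {V : Type*} {σ : Equiv.Perm V} {D c c' S : V → ℕ}

/-- The class of edges between `v` and `σ v` demands `D v`, of which `v` supplies `c v`. This is the
amount which `σ v` then has to supply: its share `c (σ v)` for its own class, and the part of `D v`
left open by `v`. -/
def load (σ : Equiv.Perm V) (D c : V → ℕ) (v : V) : ℕ :=
  c (σ v) + (D v - c v)

theorem lt_of_load_eq {v : V} (h : load σ D c v = load σ D c' v) (hlt : c (σ v) < c' (σ v)) :
    c v < c' v ∧ c v < D v := by
  unfold load at h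
  lia

theorem lt_and_lt_of_load_eq (hσ : σ.IsCycleOn Set.univ) [Finite V]
    (h : load σ D c = load σ D c') {v : V} (hlt : c v < c' v) (w : V) : c w < c' w ∧ c w < D w := by
  have hpow (k : ℕ) (u : V) (hu : c ((σ ^ k) u) < c' ((σ ^ k) u)) : c u < c' u := by
    induction k with
    | zero => exact hu
    | succ k ih =>
      rw [pow_succ', Equiv.Perm.mul_apply] at hu
      exact ih (lt_of_load_eq (congrFun h _) hu).1
  have hall (u : V) : c u < c' u := by
    obtain ⟨k, hk⟩ := hσ.exists_pow_eq' Set.finite_univ (Set.mem_univ u) (Set.mem_univ v)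
    exact hpow k u (hk ▸ hlt)
  exact lt_of_load_eq (congrFun h w) (hall _)

theorem injOn_load (hσ : σ.IsCycleOn Set.univ) [Finite V] (D : V → ℕ) :
    Set.InjOn (load σ D) {c | ∃ v, D v ≤ c v} := by
  have hle {c c' : V → ℕ} (hc : ∃ v, D v ≤ c v) (h : load σ D c = load σ D c') : c' ≤ c := by
    intro v
    by_contra! hlt
    obtain ⟨w, hw⟩ := hc
    exact (lt_and_lt_of_load_eq hσ h hlt w).2.not_ge hw
  exact fun c hc c' hc' h => le_antisymm (hle hc' h.symm) (hle hc h)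

theorem apply_le_of_load_le (h : load σ D c ≤ S) (v : V) : c v ≤ S (σ.symm v) :=
  (Nat.le_add_right _ _).trans <| by simpa [load] using h (σ.symm v)

theorem exists_load_eq [Finite V] [Nonempty V] (h : load σ D c ≤ S) :
    ∃ c', (∃ v, D v ≤ c' v) ∧ load σ D c' = S := by
  classical
  have := Fintype.ofFinite V
  obtain ⟨c', hc', hmax⟩ : ∃ c', Maximal (fun c => load σ D c ≤ S) c' := by
    refine Set.Finite.exists_maximal ?_ ⟨c, h⟩
    exact (Set.finite_Iic fun v => S (σ.symm v)).subset fun c h v => apply_le_of_load_le h v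
  refine ⟨c', ?_, ?_⟩
  · by_contra! hlt
    -- If no class is saturated, supplying one more unit everywhere leaves the load unchanged.
    refine absurd (hmax (y := c' + 1) (fun v => ?_) le_self_add (Classical.arbitrary V)) (by simp)
    have hle := hc' v
    have hlt := hlt v
    simp only [load, Pi.add_apply, Pi.one_apply] at hle ⊢
    lia
  · by_contra hne
    -- If the load at `σ v` is not tight, `σ v` can supply one more unit.
    obtain ⟨v, hv⟩ : ∃ v, load σ D c' v < S v := by
      by_contra! hge
      exact hne (le_antisymm hc' hge)
    refine absurd (hmax (y := c' + Pi.single (σ v) 1) (fun u => ?_) le_self_add (σ v)) (by simp)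
    have hle := hc' u
    rcases eq_or_ne u v with rfl | huv
    · simp only [load, Pi.add_apply, Pi.single_eq_same] at hv ⊢
      lia
    · simp only [load, Pi.add_apply, Pi.single_eq_of_ne (σ.injective.ne huv)] at hle ⊢
      lia

end Routing

/-! ### Dilates of cosmological polytopes -/

section Dilate

theorem convexHull_range_eq_image_stdSimplex {ι F : Type*} [Fintype ι] [AddCommGroup F]
    [Module ℝ F] (v : ι → F) :
    convexHull ℝ (Set.range v) = Fintype.linearCombination ℝ v '' stdSimplex ℝ ι := by
  classical
  rw [← convexHull_rangle_single_eq_stdSimplex, LinearMap.image_convexHull, ← Set.range_comp]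
  congr 2
  ext i
  simp

theorem mem_smul_convexHull_range_iff {ι F : Type*} [Fintype ι] [Nonempty ι] [AddCommGroup F]
    [Module ℝ F] (v : ι → F) {t : ℝ} (ht : 0 ≤ t) (x : F) :
    x ∈ t • convexHull ℝ (Set.range v) ↔
      ∃ w : ι → ℝ, 0 ≤ w ∧ ∑ i, w i = t ∧ ∑ i, w i • v i = x := by
  rcases ht.eq_or_lt with rfl | ht
  · rw [Set.zero_smul_set (Set.range_nonempty v).convexHull, Set.mem_zero]
    constructor
    · rintro rfl
      exact ⟨0, le_rfl, by simp, by simp⟩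
    · rintro ⟨w, hw, hsum, rfl⟩
      simp [(Fintype.sum_eq_zero_iff_of_nonneg hw).1 hsum]
  · rw [convexHull_range_eq_image_stdSimplex, ← image_smul_set, Set.mem_image]
    constructor
    · rintro ⟨_, ⟨w, ⟨hw, hsum⟩, rfl⟩, rfl⟩
      exact ⟨t • w, smul_nonneg ht.le hw, by simp [← Finset.mul_sum, hsum],
        (Fintype.linearCombination_apply ..).symm⟩
    · rintro ⟨w, hw, hsum, rfl⟩
      refine ⟨w, ⟨t⁻¹ • w, ⟨smul_nonneg (inv_nonneg.2 ht.le) hw, ?_⟩, smul_inv_smul₀ ht.ne' w⟩,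
        Fintype.linearCombination_apply ..⟩
      simp [← Finset.mul_sum, hsum, ht.ne']

variable {V E : Type*} [DecidableEq V] [DecidableEq E] (src tgt : E → V)

/-- The generating points of the cosmological polytope of a multigraph whose edge `f` is oriented
from `src f` to `tgt f`, indexed by the edge and the position of the minus sign: on the edge, on its
target or on its source. -/
def cosmoVertex : E ⊕ E ⊕ E → V ⊕ E → ℝ
  | .inl f => Pi.single (.inl (src f)) 1 + Pi.single (.inl (tgt f)) 1 - Pi.single (.inr f) 1
  | .inr (.inl f) => Pi.single (.inl (src f)) 1 - Pi.single (.inl (tgt f)) 1 + Pi.single (.inr f) 1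
  | .inr (.inr f) => -Pi.single (.inl (src f)) 1 + Pi.single (.inl (tgt f)) 1 + Pi.single (.inr f) 1

theorem cosmoVertices_eq_range :
    cosmoVertices (fun f => s(src f, tgt f)) = Set.range (cosmoVertex src tgt) := by
  ext x
  constructor
  · rintro ⟨f, i, j, hij, hx⟩
    rcases Sym2.eq_iff.1 hij with ⟨rfl, rfl⟩ | ⟨rfl, rfl⟩ <;> rcases hx with rfl | rfl | rfl
    · exact ⟨.inl f, rfl⟩
    · exact ⟨.inr (.inl f), rfl⟩
    · exact ⟨.inr (.inr f), rfl⟩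
    · exact ⟨.inl f, by rw [cosmoVertex]; abel⟩
    · exact ⟨.inr (.inr f), by rw [cosmoVertex]; abel⟩
    · exact ⟨.inr (.inl f), by rw [cosmoVertex]; abel⟩
  · rintro ⟨f | f | f, rfl⟩
    · exact ⟨f, src f, tgt f, rfl, .inl rfl⟩
    · exact ⟨f, src f, tgt f, rfl, .inr (.inl rfl)⟩
    · exact ⟨f, src f, tgt f, rfl, .inr (.inr rfl)⟩

theorem cosmoPolytope_nonempty [Nonempty E] :
    (cosmoPolytope fun f => s(src f, tgt f)).Nonempty := by
  rw [cosmoPolytope, cosmoVertices_eq_range]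
  exact (Set.range_nonempty _).convexHull

variable [Fintype E]

theorem cosmoCombination_inr (w : E ⊕ E ⊕ E → ℝ) (f : E) :
    (∑ i, w i • cosmoVertex src tgt i) (.inr f) =
      w (.inr (.inl f)) + w (.inr (.inr f)) - w (.inl f) := by
  simp only [cosmoVertex, Finset.sum_apply, Pi.smul_apply, smul_eq_mul, Fintype.sum_sum_type,
    Pi.sub_apply, Pi.add_apply, Pi.neg_apply, Pi.single_apply, reduceCtorEq, if_false,
    Sum.inr.injEq, add_zero, zero_sub, sub_self, neg_zero, zero_add, mul_neg, mul_ite, mul_one,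
    mul_zero, Finset.sum_neg_distrib, Finset.sum_ite_eq, Finset.mem_univ, if_true]
  ring

theorem cosmoCombination_inl (w : E ⊕ E ⊕ E → ℝ) (v : V) :
    (∑ i, w i • cosmoVertex src tgt i) (.inl v) =
      ∑ f with src f = v, (w (.inl f) + w (.inr (.inl f)) - w (.inr (.inr f))) +
        ∑ f with tgt f = v, (w (.inl f) - w (.inr (.inl f)) + w (.inr (.inr f))) := by
  simp only [cosmoVertex, Finset.sum_apply, Pi.smul_apply, smul_eq_mul, Fintype.sum_sum_type,
    Pi.sub_apply, Pi.add_apply, Pi.neg_apply, Pi.single_apply, reduceCtorEq, if_false,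
    Sum.inl.injEq, Finset.sum_filter, ← Finset.sum_add_distrib]
  refine Finset.sum_congr rfl fun f _ => ?_
  simp only [eq_comm (a := v)]
  split_ifs <;> ring

variable [Fintype V]

theorem sum_cosmoVertex (i : E ⊕ E ⊕ E) : ∑ k, cosmoVertex src tgt i k = 1 := by
  rcases i with f | f | f <;> simp [cosmoVertex, Finset.sum_add_distrib]

theorem sum_cosmoCombination (w : E ⊕ E ⊕ E → ℝ) :
    ∑ k, (∑ i, w i • cosmoVertex src tgt i) k = ∑ i, w i := by
  simp only [Finset.sum_apply, Pi.smul_apply, smul_eq_mul]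
  rw [Finset.sum_comm]
  simp only [← Finset.mul_sum, sum_cosmoVertex, mul_one]

theorem mem_smul_cosmoPolytope_iff [Nonempty E] {t : ℝ} (ht : 0 ≤ t) (p : V ⊕ E → ℝ) :
    p ∈ t • cosmoPolytope (fun f => s(src f, tgt f)) ↔ ∑ k, p k = t ∧
      ∃ β γ : E → ℝ, 0 ≤ β ∧ 0 ≤ γ ∧ (∀ f, p (.inr f) ≤ β f + γ f) ∧
        ∀ v, p (.inl v) + ∑ f with src f = v, p (.inr f) + ∑ f with tgt f = v, p (.inr f) =
          ∑ f with src f = v, 2 * β f + ∑ f with tgt f = v, 2 * γ f := by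
  rw [cosmoPolytope, cosmoVertices_eq_range, mem_smul_convexHull_range_iff _ ht]
  constructor
  · rintro ⟨w, hw, rfl, rfl⟩
    refine ⟨sum_cosmoCombination src tgt w, fun f => w (.inr (.inl f)), fun f => w (.inr (.inr f)),
      fun f => hw _, fun f => hw _, fun f => ?_, fun v => ?_⟩
    · rw [cosmoCombination_inr]
      exact sub_le_self _ (hw _)
    · rw [cosmoCombination_inl, add_assoc, add_add_add_comm]
      simp only [cosmoCombination_inr, ← Finset.sum_add_distrib]
      congr 1
      · exact Finset.sum_congr rfl fun f _ => by ring
      · exact Finset.sum_congr rfl fun f _ => by ring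
  · rintro ⟨rfl, β, γ, hβ, hγ, hp, hv⟩
    let w : E ⊕ E ⊕ E → ℝ := Sum.elim (fun f => β f + γ f - p (.inr f)) (Sum.elim β γ)
    have hwp : ∑ i, w i • cosmoVertex src tgt i = p := by
      ext (v | f)
      · rw [cosmoCombination_inl]
        have := hv v
        simp only [w, Sum.elim_inl, Sum.elim_inr, Finset.sum_add_distrib, Finset.sum_sub_distrib,
          ← Finset.mul_sum] at this ⊢
        linarith
      · rw [cosmoCombination_inr]
        simp [w]
    refine ⟨w, ?_, ?_, hwp⟩
    · rintro (f | f | f)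
      exacts [sub_nonneg.2 (hp f), hβ f, hγ f]
    · rw [← sum_cosmoCombination src tgt w, hwp]

end Dilate

/-! ### Lattice points of cyclic multigraphs -/

section Ehrhart

variable {ι : Type*} {P : Set (ι → ℝ)}

theorem latticePointCount_zero (hP : P.Nonempty) : latticePointCount P 0 = 1 := by
  rw [latticePointCount, Nat.cast_zero, Set.zero_smul_set hP, Set.ncard_eq_one]
  refine ⟨0, Set.ext fun x => ?_⟩
  simp [funext_iff]

theorem coeff_ehrhartSeries (hP : P.Nonempty) (t : ℕ) :
    PowerSeries.coeff t (ehrhartSeries P) = latticePointCount P t := by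
  rw [ehrhartSeries, PowerSeries.coeff_mk]
  split_ifs with ht
  · rw [ht, latticePointCount_zero hP, Nat.cast_one]
  · rfl

end Ehrhart

section HalfEdges

variable {κ : Type*} [Fintype κ]

theorem cast_demand (y : κ → ℤ) : (demand y : ℝ) = ∑ j, 2 * max (y j : ℝ) 0 := by
  have (z : ℤ) : (z.toNat : ℝ) = max (z : ℝ) 0 := by
    rw [← Int.cast_natCast, Int.toNat_eq_max, Int.cast_max, Int.cast_zero]
  simp only [demand, Nat.cast_sum, Nat.cast_mul, Nat.cast_ofNat, this]

theorem exists_halfEdges_iff [Nonempty κ] (y : κ → ℝ) (b g : ℝ) :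
    (∃ β γ : κ → ℝ, 0 ≤ β ∧ 0 ≤ γ ∧ (∀ j, y j ≤ β j + γ j) ∧ ∑ j, 2 * β j = b ∧ ∑ j, 2 * γ j = g) ↔
      0 ≤ b ∧ 0 ≤ g ∧ ∑ j, 2 * max (y j) 0 ≤ b + g := by
  constructor
  · rintro ⟨β, γ, hβ, hγ, hy, rfl, rfl⟩
    refine ⟨Finset.sum_nonneg fun j _ => mul_nonneg zero_le_two (hβ j),
      Finset.sum_nonneg fun j _ => mul_nonneg zero_le_two (hγ j), ?_⟩
    rw [← Finset.sum_add_distrib]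
    refine Finset.sum_le_sum fun j _ => ?_
    linarith [max_le (hy j) (add_nonneg (hβ j) (hγ j))]
  · rintro ⟨hb, hg, h⟩
    -- Spread the surplus evenly over the edges, then split every edge in the ratio `b : g`.
    let m (j : κ) : ℝ := max (y j) 0 + (b + g - ∑ j, 2 * max (y j) 0) / (2 * Fintype.card κ)
    let ρ : ℝ := b / (b + g)
    have hm (j : κ) : 0 ≤ m j := by
      have := sub_nonneg.2 h
      positivity
    have hym (j : κ) : y j ≤ m j :=
      (le_max_left _ _).trans (le_add_of_nonneg_right (div_nonneg (sub_nonneg.2 h) (by positivity)))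
    have hsum : ∑ j, 2 * m j = b + g := by
      simp only [m, mul_add, Finset.sum_add_distrib, Finset.sum_const, Finset.card_univ,
        nsmul_eq_mul]
      field_simp
      ring
    have hρ : ρ * (b + g) = b := div_mul_cancel_of_imp fun h0 => by linarith
    have hρ0 : 0 ≤ ρ := by positivity
    have hρ1 : 0 ≤ 1 - ρ := sub_nonneg.2 (div_le_one_of_le₀ (by linarith) (by positivity))
    refine ⟨ρ • m, (1 - ρ) • m, smul_nonneg hρ0 hm, smul_nonneg hρ1 hm, fun j => ?_, ?_, ?_⟩
    · simpa [← add_mul] using hym j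
    · simp [mul_left_comm 2 ρ, ← Finset.mul_sum, hsum, hρ]
    · simp only [Pi.smul_apply, smul_eq_mul, mul_left_comm 2 (1 - ρ), ← Finset.mul_sum, hsum]
      linarith

end HalfEdges

section Cyclic

variable {V : Type*} {κ : V → Type*}

/-- The multigraph with a class `κ v` of parallel edges between `v` and `σ v` for each vertex `v`;
a generalized multicycle if `σ` is a cyclic permutation. -/
def cyclicEnds (σ : Equiv.Perm V) (κ : V → Type*) : (Σ v, κ v) → Sym2 V :=
  fun f => s(f.1, σ f.1)

variable [∀ v, Fintype (κ v)] (σ : Equiv.Perm V)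

/-- The coordinates of `p` at the edges between `v` and `σ v`. -/
def edgeCoord {R : Type*} (p : V ⊕ (Σ v, κ v) → R) (v : V) : κ v → R :=
  fun j => p (.inr ⟨v, j⟩)

/-- The coordinate of `p` at the vertex `σ v` plus the coordinates at the edges of its two classes,
the amount of half-edge units that `σ v` supplies. It is indexed by `v` to match `load`. -/
def supply {R : Type*} [AddCommMonoid R] (p : V ⊕ (Σ v, κ v) → R) (v : V) : R :=
  p (.inl (σ v)) + ∑ j, edgeCoord p (σ v) j + ∑ j, edgeCoord p v j

theorem eq_of_edgeCoord_eq_of_supply_eq {R : Type*} [AddCommGroup R] {p p' : V ⊕ (Σ v, κ v) → R}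
    (he : ∀ v, edgeCoord p v = edgeCoord p' v) (hs : supply σ p = supply σ p') : p = p' := by
  ext (v | ⟨v, j⟩)
  · simpa [supply, he] using congrFun hs (σ.symm v)
  · exact congrFun (he v) j

variable [Fintype V]

theorem sum_supply {R : Type*} [AddCommMonoid R] (p : V ⊕ (Σ v, κ v) → R) :
    ∑ v, supply σ p v = ∑ k, p k + ∑ v, ∑ j, edgeCoord p v j := by
  simp only [supply, Finset.sum_add_distrib, Fintype.sum_sum_type, Fintype.sum_sigma]
  rw [Equiv.sum_comp σ fun v => p (.inl v), Equiv.sum_comp σ fun v => ∑ j, edgeCoord p v j]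
  rfl

variable [DecidableEq V]

theorem sum_filter_fst {R : Type*} [AddCommMonoid R] (h : (Σ v, κ v) → R) (v : V) :
    ∑ f with f.1 = v, h f = ∑ j, h ⟨v, j⟩ := by
  rw [Finset.sum_filter, Fintype.sum_sigma, Fintype.sum_eq_single v]
  · simp
  · intro u hu
    simp [hu]

theorem sum_filter_apply_fst {R : Type*} [AddCommMonoid R] (h : (Σ v, κ v) → R) (v : V) :
    ∑ f with σ f.1 = σ v, h f = ∑ j, h ⟨v, j⟩ := by
  simp only [σ.injective.eq_iff, sum_filter_fst]

variable [∀ v, DecidableEq (κ v)]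

theorem mem_smul_cosmoPolytope_cyclicEnds_iff_exists_halfEdges [Nonempty (Σ v, κ v)] {t : ℝ}
    (ht : 0 ≤ t) (p : V ⊕ (Σ v, κ v) → ℝ) :
    p ∈ t • cosmoPolytope (cyclicEnds σ κ) ↔ ∑ k, p k = t ∧
      ∃ β γ : ∀ v, κ v → ℝ, (∀ v, 0 ≤ β v) ∧ (∀ v, 0 ≤ γ v) ∧
        (∀ v j, edgeCoord p v j ≤ β v j + γ v j) ∧
        ∀ v, supply σ p v = ∑ j, 2 * β (σ v) j + ∑ j, 2 * γ v j := by
  refine (mem_smul_cosmoPolytope_iff (fun f => f.1) (fun f => σ f.1) ht p).trans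
    (and_congr_right fun _ => ⟨?_, ?_⟩)
  · rintro ⟨β, γ, hβ, hγ, hp, hv⟩
    refine ⟨fun v j => β ⟨v, j⟩, fun v j => γ ⟨v, j⟩, fun v j => hβ _, fun v j => hγ _,
      fun v j => hp _, fun v => ?_⟩
    simpa only [supply, edgeCoord, sum_filter_fst, sum_filter_apply_fst] using hv (σ v)
  · rintro ⟨β, γ, hβ, hγ, hp, hv⟩
    refine ⟨fun f => β f.1 f.2, fun f => γ f.1 f.2, fun f => hβ _ _, fun f => hγ _ _,
      fun f => hp _ _, σ.surjective.forall.2 fun v => ?_⟩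
    simpa only [supply, edgeCoord, sum_filter_fst, sum_filter_apply_fst] using hv v

theorem mem_smul_cosmoPolytope_cyclicEnds_iff [Nonempty V] [∀ v, Nonempty (κ v)] {t : ℝ}
    (ht : 0 ≤ t) (p : V ⊕ (Σ v, κ v) → ℝ) :
    p ∈ t • cosmoPolytope (cyclicEnds σ κ) ↔ ∑ k, p k = t ∧
      ∃ c : V → ℝ, 0 ≤ c ∧ ∀ v, c (σ v) ≤ supply σ p v ∧
        c (σ v) + ∑ j, 2 * max (edgeCoord p v j) 0 ≤ c v + supply σ p v := by
  have : Nonempty (Σ v, κ v) := nonempty_sigma.2 ⟨Classical.arbitrary V, inferInstance⟩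
  rw [mem_smul_cosmoPolytope_cyclicEnds_iff_exists_halfEdges σ ht]
  refine and_congr_right fun _ => ⟨?_, ?_⟩
  · rintro ⟨β, γ, hβ, hγ, hp, hv⟩
    have h (v : V) := (exists_halfEdges_iff (edgeCoord p v) _ _).1
      ⟨β v, γ v, hβ v, hγ v, hp v, rfl, rfl⟩
    refine ⟨fun v => ∑ j, 2 * β v j, fun v => (h v).1, fun v => ⟨?_, ?_⟩⟩
    · linarith [hv v, (h v).2.1]
    · linarith [hv v, (h v).2.2]
  · rintro ⟨c, hc, hv⟩
    have h (v : V) := (exists_halfEdges_iff (edgeCoord p v) (c v) (supply σ p v - c (σ v))).2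
      ⟨hc v, sub_nonneg.2 (hv v).1, by linarith [(hv v).2]⟩
    choose β γ hβ hγ hp hc hg using h
    exact ⟨β, γ, hβ, hγ, hp, fun v => by linarith [hc (σ v), hg v]⟩

theorem intCast_mem_smul_cosmoPolytope_cyclicEnds_iff [Nonempty V] [∀ v, Nonempty (κ v)] (t : ℕ)
    (x : V ⊕ (Σ v, κ v) → ℤ) :
    (fun k => (x k : ℝ)) ∈ (t : ℝ) • cosmoPolytope (cyclicEnds σ κ) ↔ ∑ k, x k = t ∧
      ∃ c : V → ℕ, ∀ v, (load σ (fun v => demand (edgeCoord x v)) c v : ℤ) ≤ supply σ x v := by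
  have hsupply (v : V) : supply σ (fun k => (x k : ℝ)) v = supply σ x v := by
    simp [supply, edgeCoord]
  have hdemand (v : V) : ∑ j, 2 * max (edgeCoord (fun k => (x k : ℝ)) v j) 0 =
      demand (edgeCoord x v) := (cast_demand _).symm
  simp only [mem_smul_cosmoPolytope_cyclicEnds_iff σ t.cast_nonneg, hsupply, hdemand]
  refine and_congr (by norm_cast) ⟨?_, ?_⟩
  · rintro ⟨c, hc, hv⟩
    refine ⟨fun v => ⌊c v⌋₊, fun v => ?_⟩
    obtain ⟨h₁, h₂⟩ := hv v
    have hle := Nat.floor_le (hc (σ v))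
    have hlt := Nat.lt_floor_add_one (c v)
    have h₁' : (⌊c (σ v)⌋₊ : ℤ) ≤ supply σ x v := by
      rw [← Int.cast_le (R := ℝ)]
      push_cast
      linarith
    have h₂' : (⌊c (σ v)⌋₊ : ℤ) + demand (edgeCoord x v) < ⌊c v⌋₊ + 1 + supply σ x v := by
      rw [← Int.cast_lt (R := ℝ)]
      push_cast
      linarith
    rw [load]
    lia
  · rintro ⟨c, hv⟩
    refine ⟨fun v => c v, fun v => Nat.cast_nonneg _, fun v => ?_⟩
    have := hv v
    rw [load] at this
    have h₁ : (c (σ v) : ℤ) ≤ supply σ x v := by lia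
    have h₂ : (c (σ v) : ℤ) + demand (edgeCoord x v) ≤ c v + supply σ x v := by lia
    rw [← Int.cast_le (R := ℝ)] at h₁ h₂
    push_cast at h₁ h₂
    exact ⟨h₁, h₂⟩

end Cyclic

section Configuration

variable {V : Type*} {κ : V → Type*} [∀ v, Fintype (κ v)] (σ : Equiv.Perm V)

/-- The lattice point with edge coordinates `(q v).1` at which `σ v` supplies exactly the load that
the amounts `(q v).2` impose on it. -/
def latticePoint (q : ∀ v, ClassState (κ v)) : V ⊕ (Σ v, κ v) → ℤ
  | .inl v => load σ (fun v => demand (q v).1) (fun v => (q v).2) (σ.symm v) -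
      ∑ j, (q v).1 j - ∑ j, (q (σ.symm v)).1 j
  | .inr f => (q f.1).1 f.2

variable (q : ∀ v, ClassState (κ v))

theorem edgeCoord_latticePoint (v : V) : edgeCoord (latticePoint σ q) v = (q v).1 :=
  rfl

theorem supply_latticePoint (v : V) :
    supply σ (latticePoint σ q) v =
      load σ (fun v => demand (q v).1) (fun v => (q v).2) v := by
  have h : ∑ j, (q (σ.symm (σ v))).1 j = ∑ j, (q v).1 j :=
    congrArg (fun u => ∑ j, (q u).1 j) (σ.symm_apply_apply v)
  simp only [supply, edgeCoord, latticePoint, h, Equiv.symm_apply_apply]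
  ring

variable [Fintype V]

theorem sum_load (D c : V → ℕ) : ∑ v, load σ D c v = ∑ v, (D v + (c v - D v)) := by
  simp only [load, Finset.sum_add_distrib]
  rw [Equiv.sum_comp σ c, ← Finset.sum_add_distrib, ← Finset.sum_add_distrib]
  exact Finset.sum_congr rfl fun v _ => by lia

theorem sum_latticePoint : ∑ k, latticePoint σ q k = ∑ v, (q v).weight := by
  have h := sum_supply σ (latticePoint σ q)
  simp only [supply_latticePoint, edgeCoord_latticePoint, ← Nat.cast_sum, sum_load] at h
  simp only [ClassState.weight, Nat.cast_sum, Nat.cast_add, demand_eq_absSum_add_sum,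
    Finset.sum_add_distrib] at h ⊢
  linarith

variable [DecidableEq V] [∀ v, DecidableEq (κ v)] [∀ v, Nonempty (κ v)] {σ}

theorem bijOn_latticePoint [Nonempty V] (hσ : σ.IsCycleOn Set.univ) (t : ℕ) :
    Set.BijOn (latticePoint σ)
      {q : ∀ v, ClassState (κ v) | (∃ v, (q v).IsSaturated) ∧ ∑ v, (q v).weight = t}
      {x | (fun k => (x k : ℝ)) ∈ (t : ℝ) • cosmoPolytope (cyclicEnds σ κ)} := by
  simp only [intCast_mem_smul_cosmoPolytope_cyclicEnds_iff]
  refine ⟨?_, ?_, ?_⟩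
  · rintro q ⟨-, hq⟩
    exact ⟨by rw [sum_latticePoint, hq], fun v => (q v).2, fun v => (supply_latticePoint σ q v).ge⟩
  · rintro q ⟨hq, -⟩ q' ⟨hq', -⟩ h
    have hy (v : V) : (q v).1 = (q' v).1 := by
      rw [← edgeCoord_latticePoint σ q, h, edgeCoord_latticePoint]
    have hload : load σ (fun v => demand (q v).1) (fun v => (q v).2) =
        load σ (fun v => demand (q v).1) (fun v => (q' v).2) := by
      ext v
      have := congrArg (fun p => supply σ p v) h
      simpa only [supply_latticePoint, ← hy, Nat.cast_inj] using this
    have hsat : ∃ v, demand (q v).1 ≤ (q' v).2 := by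
      simpa only [ClassState.IsSaturated, ← hy] using hq'
    have hc := injOn_load hσ _ hq hsat hload
    exact funext fun v => Prod.ext (hy v) (congrFun hc v)
  · rintro x ⟨hx, c, hc⟩
    have hS (v : V) : (0 : ℤ) ≤ supply σ x v := (Nat.cast_nonneg _).trans (hc v)
    obtain ⟨c', hsat, hload⟩ := exists_load_eq (S := fun v => (supply σ x v).toNat)
      fun v => (Int.le_toNat (hS v)).2 (hc v)
    have hpoint : latticePoint σ (fun v => (edgeCoord x v, c' v)) = x := by
      refine eq_of_edgeCoord_eq_of_supply_eq σ (fun v => rfl) (funext fun v => ?_)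
      rw [supply_latticePoint, hload, Int.toNat_of_nonneg (hS v)]
    refine ⟨fun v => (edgeCoord x v, c' v), ⟨hsat, ?_⟩, hpoint⟩
    have := sum_latticePoint σ fun v => (edgeCoord x v, c' v)
    rw [hpoint, hx] at this
    exact_mod_cast this.symm

theorem ehrhartSeries_cosmoPolytope_cyclicEnds [Nonempty V] (hσ : σ.IsCycleOn Set.univ) :
    ehrhartSeries (cosmoPolytope (cyclicEnds σ κ)) =
      ∏ v, countingSeries ℚ (ClassState.weight : ClassState (κ v) → ℕ) -
        ∏ v, countingSeries ℚ fun q : {q : ClassState (κ v) // ¬q.IsSaturated} => q.1.weight := by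
  have : Nonempty (Σ v, κ v) := nonempty_sigma.2 ⟨Classical.arbitrary V, inferInstance⟩
  have hP : (cosmoPolytope (cyclicEnds σ κ)).Nonempty :=
    cosmoPolytope_nonempty (fun f : Σ v, κ v => f.1) fun f => σ f.1
  rw [← countingSeries_pi_exists ℚ (fun _ => ClassState.finiteFibers_weight)
    fun _ => ClassState.IsSaturated]
  ext t
  rw [coeff_ehrhartSeries hP, coeff_countingSeries, latticePointCount, ← Nat.card_coe_set_eq,
    ← Nat.card_congr ((bijOn_latticePoint hσ t).equiv _)]
  exact congrArg _ (Nat.card_congr (Equiv.subtypeSubtypeEquivSubtypeInter _ _).symm)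

end Configuration

theorem hstar_multicycle_general {V : Type*} [Fintype V] [Nonempty V] [DecidableEq V]
    {κ : V → Type*} [∀ v, Fintype (κ v)] [∀ v, DecidableEq (κ v)] [∀ v, Nonempty (κ v)]
    {σ : Equiv.Perm V} (hσ : σ.IsCycleOn Set.univ) :
    IsHStarPoly (cosmoPolytope (cyclicEnds σ κ))
      (Fintype.card V + Fintype.card (Σ v, κ v) - 1)
      ((∏ v, ((1 + Polynomial.X) ^ Fintype.card (κ v) +
          2 * (Fintype.card (κ v) : Polynomial ℚ) * Polynomial.X *
            (1 + Polynomial.X) ^ (Fintype.card (κ v) - 1))) -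
        ∏ v, 2 * (Fintype.card (κ v) : Polynomial ℚ) * Polynomial.X *
          (1 + Polynomial.X) ^ (Fintype.card (κ v) - 1)) := by
  have hd : Fintype.card V + Fintype.card (Σ v, κ v) - 1 + 1 = ∑ v, (Fintype.card (κ v) + 1) := by
    have := Fintype.card_pos (α := V)
    rw [Fintype.card_sigma, Finset.sum_add_distrib, Finset.sum_const, Finset.card_univ]
    lia
  rw [IsHStarPoly, hd, ehrhartSeries_cosmoPolytope_cyclicEnds hσ, ← Finset.prod_pow_eq_pow_sum,
    sub_mul, ← Finset.prod_mul_distrib, ← Finset.prod_mul_distrib]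
  simp only [ClassState.countingSeries_weight_mul, ClassState.countingSeries_unsaturated_mul]
  simp only [← Polynomial.coeToPowerSeries.ringHom_apply, map_sub, map_prod, map_add, map_mul,
    map_pow, map_one, map_natCast, map_ofNat]
  simp only [Polynomial.coeToPowerSeries.ringHom_apply, Polynomial.coe_X]

theorem isCycleOn_addRight_one (n : ℕ) [NeZero n] :
    (Equiv.addRight (1 : ZMod n)).IsCycleOn Set.univ :=
  ⟨Set.bijOn_univ.2 (Equiv.bijective _), fun x _ y _ => ⟨((y - x : ZMod n).val : ℤ), by simp⟩⟩

theorem multicycleEnds_eq_cyclicEnds (n : ℕ) (a : ZMod n → ℕ) :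
    multicycleEnds n a = cyclicEnds (Equiv.addRight 1) fun i => Fin (a i) :=
  rfl

/-- Let `n ≥ 3` and `a = (a_1, …, a_n)` with all `a_i ≥ 1`.  The
`h*`-polynomial of the cosmological polytope of the multicycle `C_a` is
`h*(C_{C_a}; z) = ∏_i ((1+z)^{a_i} + 2 a_i z (1+z)^{a_i−1}) − ∏_i 2 a_i z (1+z)^{a_i−1}`. -/
theorem hstar_multicycle (n : ℕ) [NeZero n] (hn : 3 ≤ n)
    (a : ZMod n → ℕ) (ha : ∀ i, 1 ≤ a i) :
    IsHStarPoly (cosmoPolytope (multicycleEnds n a))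
      (Fintype.card (ZMod n) + Fintype.card (Σ i : ZMod n, Fin (a i)) - 1)
      ((∏ i : ZMod n, ((1 + Polynomial.X) ^ (a i) +
          2 * (a i : Polynomial ℚ) * Polynomial.X * (1 + Polynomial.X) ^ (a i - 1))) -
        ∏ i : ZMod n,
          2 * (a i : Polynomial ℚ) * Polynomial.X * (1 + Polynomial.X) ^ (a i - 1)) := by
  have (i : ZMod n) : Nonempty (Fin (a i)) := Fin.pos_iff_nonempty.1 (ha i)
  simpa only [Fintype.card_fin, multicycleEnds_eq_cyclicEnds] using
    hstar_multicycle_general (κ := fun i => Fin (a i)) (isCycleOn_addRight_one n)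
end

section
/- Let n ≥ 3 and let a = (a_1, …, a_n) ∈ ℤ^n with a_i ≥ 1 for all i. Then the normalized volume of the cosmological polytope of the multicycle C_a is Vol(C_{C_a}) = ∏_{i=1}^n (1 + a_i) 2^{a_i} − ∏_{i=1}^n a_i 2^{a_i}. -/
open Polynomial Pointwise

/-!
The dilate `t C_G` is the slice, at coordinate sum `t`, of the cone over the vertices of `C_G`.
Splitting a point of the cone into the contributions of the edges shows that it is described by a
flow: an edge `f = ij` with coordinate `y` takes `y⁻` from each of its endpoints and moves an amount
`σ` with `|σ| ≤ y⁺` between them, and what is taken from a vertex may not exceed its coordinate.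

On a cycle, rounding the flow down preserves feasibility, so that a lattice point of the dilate
always carries an integral flow. Among these there is exactly one that is maximal, and the maximal
flows are the saturated ones: each vertex with positive slack sends its bundle at full capacity, and
some bundle is at full capacity. For given edge coordinates and slacks the saturated flows form a
difference of two boxes, while the edge coordinates and slacks themselves are unconstrained. Summing
over them turns the two boxes into two products over the bundles, and gives
`h^* = ∏ (2 aᵢ z (1 + z) ^ (aᵢ - 1) + (1 + z) ^ aᵢ) - ∏ 2 aᵢ z (1 + z) ^ (aᵢ - 1)`.
-/

/-! ### Cones over polytopes and flows on half-edges -/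

theorem mem_smul_convexHull_iff_mem_hull {𝕜 M : Type*} [Field 𝕜] [LinearOrder 𝕜]
    [IsStrictOrderedRing 𝕜] [AddCommGroup M] [Module 𝕜 M] {S : Set M} {φ : M →ₗ[𝕜] 𝕜}
    (hφ : ∀ v ∈ S, φ v = 1) {t : 𝕜} (ht : 0 < t) {x : M} :
    x ∈ t • convexHull 𝕜 S ↔ x ∈ PointedCone.hull 𝕜 S ∧ φ x = t := by
  constructor
  · rintro ⟨y, hy, rfl⟩
    have hyφ : φ y = 1 := convexHull_min (t := {y | φ y = 1}) hφ
      ((convex_singleton 1).linear_preimage φ) hy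
    have hyS : y ∈ PointedCone.hull 𝕜 S :=
      convexHull_min PointedCone.subset_hull (PointedCone.convex _) hy
    exact ⟨PointedCone.smul_mem _ ht.le hyS, by simp [hyφ]⟩
  · rintro ⟨hx, hxt⟩
    obtain ⟨k, c, v, rfl⟩ := Submodule.mem_span_set'.1 hx
    have hc : ∑ i, (c i : 𝕜) = t := by
      rw [← hxt, map_sum]
      refine Finset.sum_congr rfl fun i _ => ?_
      rw [Nonneg.mk_smul (c i : 𝕜) (c i).2, map_smul, hφ _ (v i).2, smul_eq_mul, mul_one]
    refine ⟨Finset.univ.centerMass (fun i => (c i : 𝕜)) (fun i => (v i : M)),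
      Finset.univ.centerMass_mem_convexHull (fun i _ => (c i).2) (hc ▸ ht) fun i _ => (v i).2, ?_⟩
    simp only [Finset.centerMass, hc]
    exact smul_inv_smul₀ ht.ne' _

theorem exists_sum_eq_of_abs_le_sum {𝕜 ι : Type*} [Field 𝕜] [LinearOrder 𝕜]
    [IsStrictOrderedRing 𝕜] [Fintype ι] {c : ι → 𝕜} (hc : ∀ j, 0 ≤ c j) {r : 𝕜}
    (hr : |r| ≤ ∑ j, c j) : ∃ σ : ι → 𝕜, (∀ j, |σ j| ≤ c j) ∧ ∑ j, σ j = r := by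
  have hsum : 0 ≤ ∑ j, c j := Finset.sum_nonneg fun j _ => hc j
  refine ⟨fun j => r / (∑ k, c k) * c j, fun j => ?_, ?_⟩
  · rw [abs_mul, abs_div, abs_of_nonneg hsum, abs_of_nonneg (hc j)]
    exact mul_le_of_le_one_left (hc j) (div_le_one_of_le₀ hr hsum)
  · rw [← Finset.mul_sum]
    refine div_mul_cancel_of_imp fun h0 => ?_
    rwa [h0, abs_nonpos_iff] at hr

theorem exists_abs_le_and_fiber_sum_iff {𝕜 ι : Type*} {κ : ι → Type*} [Field 𝕜] [LinearOrder 𝕜]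
    [IsStrictOrderedRing 𝕜] [∀ i, Fintype (κ i)] {c : (Σ i, κ i) → 𝕜} (hc : ∀ f, 0 ≤ c f)
    (p : (ι → 𝕜) → Prop) :
    (∃ σ : (Σ i, κ i) → 𝕜, (∀ f, |σ f| ≤ c f) ∧ p fun i => ∑ j, σ ⟨i, j⟩) ↔
      ∃ r : ι → 𝕜, (∀ i, |r i| ≤ ∑ j, c ⟨i, j⟩) ∧ p r := by
  constructor
  · rintro ⟨σ, hσ, hp⟩
    refine ⟨_, fun i => ?_, hp⟩
    exact (Finset.abs_sum_le_sum_abs _ _).trans (Finset.sum_le_sum fun j _ => hσ _)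
  · rintro ⟨r, hr, hp⟩
    choose σ hσ hsum using fun i => exists_sum_eq_of_abs_le_sum (fun j => hc ⟨i, j⟩) (hr i)
    exact ⟨fun f => σ f.1 f.2, fun f => hσ f.1 f.2, by simpa only [hsum] using hp⟩

theorem exists_abs_le_posPart_iff {R : Type*} [CommRing R] [LinearOrder R] [IsStrictOrderedRing R]
    {u v y : R} :
    (∃ σ : R, |σ| ≤ y⁺ ∧ y⁻ + σ ≤ u ∧ y⁻ - σ ≤ v) ↔ 0 ≤ u + v ∧ 0 ≤ u + y ∧ 0 ≤ v + y := by
  have hy_parts : y = y⁺ - y⁻ := (posPart_sub_negPart y).symm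
  have hneg : 0 ≤ y⁻ := negPart_nonneg y
  constructor
  · rintro ⟨σ, hσ, hu, hv⟩
    rw [abs_le] at hσ
    refine ⟨?_, ?_, ?_⟩ <;> linarith
  · rintro ⟨huv, huy, hvy⟩
    rcases le_total 0 y with hy | hy
    · rw [posPart_eq_self.2 hy, negPart_eq_zero.2 hy]
      refine ⟨min u y, abs_le.2 ⟨le_min ?_ ?_, min_le_right u y⟩, by simp, ?_⟩
      · linarith
      · linarith
      · rcases min_choice u y with h | h <;> rw [h] <;> linarith
    · rw [posPart_eq_zero.2 hy, negPart_eq_neg.2 hy]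
      refine ⟨0, by simp, ?_, ?_⟩ <;> linarith

theorem exists_le_sum_fiber_eq_iff {H V M : Type*} [Fintype H] [DecidableEq V] [AddCommGroup M]
    [PartialOrder M] [IsOrderedAddMonoid M] {η : H → V} (hη : Function.Surjective η) (l : H → M)
    (x : V → M) :
    (∃ w, l ≤ w ∧ ∀ i, x i = ∑ h with η h = i, w h) ↔ ∀ i, ∑ h with η h = i, l h ≤ x i := by
  classical
  constructor
  · rintro ⟨w, hlw, hx⟩ i
    exact (Finset.sum_le_sum fun h _ => hlw h).trans (hx i).ge
  · intro hx
    obtain ⟨r, hr⟩ := hη.hasRightInverse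
    let slack : V → M := fun i => x i - ∑ h with η h = i, l h
    refine ⟨fun h => l h + if r (η h) = h then slack (η h) else 0, fun h => ?_, fun i => ?_⟩
    · refine le_add_of_nonneg_right ?_
      split_ifs
      exacts [sub_nonneg.2 (hx (η h)), le_rfl]
    · have hfiber : ∀ h ∈ Finset.univ.filter (η · = i),
          (if r (η h) = h then slack (η h) else 0) = if r i = h then slack i else 0 := by
        intro h hh
        rw [(Finset.mem_filter.1 hh).2]
      rw [Finset.sum_add_distrib, Finset.sum_congr rfl hfiber, Finset.sum_ite_eq,
        if_pos (by simp [hr i])]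
      exact (add_sub_cancel _ _).symm

section HalfEdges

variable {V E : Type*}

/-- The endpoint map of the multigraph with half-edges `E ⊕ E`, in which the half-edges
`Sum.inl f` and `Sum.inr f` of the edge `f` are attached to the vertices prescribed by `η`. Working
with half-edges orients each edge, which makes its two endpoints accessible. -/
def halfEdgeEnds (η : E ⊕ E → V) (f : E) : Sym2 V := s(η (Sum.inl f), η (Sum.inr f))

variable [DecidableEq V] [DecidableEq E]

/-- The vector `u e_i + v e_j + y e_f`, where `i` and `j` are the endpoints of the edge `f`. -/
def edgeVector (η : E ⊕ E → V) (f : E) (u v y : ℝ) : V ⊕ E → ℝ :=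
  u • Pi.single (Sum.inl (η (Sum.inl f))) 1 + v • Pi.single (Sum.inl (η (Sum.inr f))) 1 +
    y • Pi.single (Sum.inr f) 1

theorem cosmoVertices_halfEdgeEnds (η : E ⊕ E → V) :
    cosmoVertices (halfEdgeEnds η) =
      ⋃ f, {edgeVector η f 1 1 (-1), edgeVector η f 1 (-1) 1, edgeVector η f (-1) 1 1} := by
  ext x
  simp only [cosmoVertices, edgeVector, halfEdgeEnds, Set.mem_ofPred_eq, Set.mem_iUnion,
    Set.mem_insert_iff, Set.mem_singleton_iff, neg_smul, one_smul, ← sub_eq_add_neg]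
  refine exists_congr fun f => ⟨?_, fun h => ⟨_, _, rfl, h⟩⟩
  rintro ⟨i, j, hij, hx⟩
  rcases Sym2.eq_iff.1 hij with ⟨rfl, rfl⟩ | ⟨rfl, rfl⟩
  · exact hx
  · rcases hx with rfl | rfl | rfl
    · exact Or.inl (by abel)
    · exact Or.inr (Or.inr (by abel))
    · exact Or.inr (Or.inl (by abel))

theorem mem_hull_edgeVectors_iff (η : E ⊕ E → V) (f : E) (x : V ⊕ E → ℝ) :
    x ∈ PointedCone.hull ℝ
        {edgeVector η f 1 1 (-1), edgeVector η f 1 (-1) 1, edgeVector η f (-1) 1 1} ↔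
      ∃ u v y : ℝ, (0 ≤ u + v ∧ 0 ≤ u + y ∧ 0 ≤ v + y) ∧ edgeVector η f u v y = x := by
  rw [PointedCone.hull, Submodule.mem_span_triple]
  constructor
  · rintro ⟨⟨α, hα⟩, ⟨β, hβ⟩, ⟨γ, hγ⟩, rfl⟩
    refine ⟨α + β - γ, α - β + γ, -α + β + γ, ⟨?_, ?_, ?_⟩, ?_⟩
    · linarith
    · linarith
    · linarith
    · simp only [Nonneg.mk_smul, edgeVector]
      module
  · rintro ⟨u, v, y, ⟨huv, huy, hvy⟩, rfl⟩
    refine ⟨⟨(u + v) / 2, by linarith⟩, ⟨(u + y) / 2, by linarith⟩, ⟨(v + y) / 2, by linarith⟩, ?_⟩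
    simp only [Nonneg.mk_smul, edgeVector]
    module

variable [Fintype E]

theorem sum_edgeVector_inl (η : E ⊕ E → V) (w : E ⊕ E → ℝ) (y : E → ℝ) (i : V) :
    (∑ f, edgeVector η f (w (Sum.inl f)) (w (Sum.inr f)) (y f)) (Sum.inl i) =
      ∑ h with η h = i, w h := by
  simp [edgeVector, Finset.sum_apply, Finset.sum_filter, Pi.single_apply, Finset.sum_add_distrib,
    eq_comm]

theorem sum_edgeVector_inr (η : E ⊕ E → V) (w : E ⊕ E → ℝ) (y : E → ℝ) (f : E) :
    (∑ f, edgeVector η f (w (Sum.inl f)) (w (Sum.inr f)) (y f)) (Sum.inr f) = y f := by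
  simp [edgeVector, Finset.sum_apply, Pi.single_apply]

theorem mem_hull_cosmoVertices_iff (η : E ⊕ E → V) (x : V ⊕ E → ℝ) :
    x ∈ PointedCone.hull ℝ (cosmoVertices (halfEdgeEnds η)) ↔
      ∃ w : E ⊕ E → ℝ,
        (∀ f, 0 ≤ w (Sum.inl f) + w (Sum.inr f) ∧ 0 ≤ w (Sum.inl f) + x (Sum.inr f) ∧
          0 ≤ w (Sum.inr f) + x (Sum.inr f)) ∧
        ∀ i, x (Sum.inl i) = ∑ h with η h = i, w h := by
  rw [cosmoVertices_halfEdgeEnds, PointedCone.hull, Submodule.span_iUnion,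
    Submodule.mem_iSup_iff_exists_finsupp]
  constructor
  · rintro ⟨z, hz, rfl⟩
    choose u v y hw hz using fun f => (mem_hull_edgeVectors_iff η f (z f)).1 (hz f)
    have hsum : (z.sum fun _ p => p) =
        ∑ f, edgeVector η f (Sum.elim u v (Sum.inl f)) (Sum.elim u v (Sum.inr f)) (y f) := by
      rw [Finsupp.sum_fintype _ _ fun _ => rfl]
      exact Finset.sum_congr rfl fun f _ => (hz f).symm
    refine ⟨Sum.elim u v, fun f => ?_, fun i => ?_⟩
    · rw [hsum, sum_edgeVector_inr]
      exact hw f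
    · rw [hsum, sum_edgeVector_inl]
  · rintro ⟨w, hw, hx⟩
    refine ⟨Finsupp.equivFunOnFinite.symm
      fun f => edgeVector η f (w (Sum.inl f)) (w (Sum.inr f)) (x (Sum.inr f)),
      fun f => (mem_hull_edgeVectors_iff η f _).2 ⟨_, _, _, hw f, rfl⟩, ?_⟩
    rw [Finsupp.sum_fintype _ _ fun _ => rfl]
    ext (i | f)
    · exact (sum_edgeVector_inl η w (fun f => x (Sum.inr f)) i).trans (hx i).symm
    · exact sum_edgeVector_inr η w (fun f => x (Sum.inr f)) f

theorem mem_smul_cosmoPolytope_iff_mem_hull [Fintype V] (η : E ⊕ E → V) {t : ℝ} (ht : 0 < t)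
    (x : V ⊕ E → ℝ) :
    x ∈ t • cosmoPolytope (halfEdgeEnds η) ↔
      x ∈ PointedCone.hull ℝ (cosmoVertices (halfEdgeEnds η)) ∧ ∑ k, x k = t := by
  refine (mem_smul_convexHull_iff_mem_hull (φ := ∑ k, LinearMap.proj k) ?_ ht).trans (by simp)
  simp only [cosmoVertices_halfEdgeEnds, Set.mem_iUnion, Set.mem_insert_iff, Set.mem_singleton_iff]
  rintro _ ⟨f, rfl | rfl | rfl⟩ <;> simp [edgeVector, Finset.sum_add_distrib, Pi.single_apply]

theorem mem_smul_cosmoPolytope_iff_exists_flow [Fintype V] {η : E ⊕ E → V}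
    (hη : Function.Surjective η) {t : ℝ} (ht : 0 < t) (x : V ⊕ E → ℝ) :
    x ∈ t • cosmoPolytope (halfEdgeEnds η) ↔
      (∃ σ : E → ℝ, (∀ f, |σ f| ≤ (x (Sum.inr f))⁺) ∧
        ∀ i, ∑ h with η h = i, Sum.elim (fun f => (x (Sum.inr f))⁻ + σ f)
          (fun f => (x (Sum.inr f))⁻ - σ f) h ≤ x (Sum.inl i)) ∧
      ∑ k, x k = t := by
  rw [mem_smul_cosmoPolytope_iff_mem_hull η ht, mem_hull_cosmoVertices_iff]
  refine and_congr_left fun _ => ?_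
  simp only [← exists_abs_le_posPart_iff, ← exists_le_sum_fiber_eq_iff hη,
    Classical.skolem, forall_and, ← exists_and_left, ← exists_and_right, Pi.le_def, Sum.forall,
    Sum.elim_inl, Sum.elim_inr]
  rw [exists_comm]
  simp only [and_assoc]

end HalfEdges

/-! ### Saturated flows on a cycle -/

section CycleFlows

variable {n : ℕ}

/-- Feasibility of the flow `s` on a cycle with capacities `c` and supplies `z`: `s i` is the flow
from the vertex `i` to the vertex `i + 1` (negative for flow in the other direction), and the net
flow out of a vertex may not exceed its supply. -/
def IsFeasibleFlow {R : Type*} [Ring R] [LinearOrder R] (c : ZMod n → ℕ) (z s : ZMod n → R) :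
    Prop :=
  ∀ i, |s i| ≤ c i ∧ s i ≤ z i + s (i - 1)

theorem IsFeasibleFlow.floor {K : Type*} [Ring K] [LinearOrder K] [IsStrictOrderedRing K]
    [FloorRing K] {c : ZMod n → ℕ} {z : ZMod n → ℤ} {r : ZMod n → K}
    (hr : IsFeasibleFlow c (fun i => (z i : K)) r) : IsFeasibleFlow c z fun i => ⌊r i⌋ := by
  refine fun i => ⟨abs_le.2 ⟨?_, ?_⟩, ?_⟩
  · rw [Int.le_floor]
    simpa using (abs_le.1 (hr i).1).1
  · rw [← Int.floor_natCast (R := K)]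
    exact Int.floor_le_floor (abs_le.1 (hr i).1).2
  · rw [← Int.floor_intCast_add]
    exact Int.floor_le_floor (hr i).2

theorem exists_isFeasibleFlow_intCast_iff {K : Type*} [Ring K] [LinearOrder K]
    [IsStrictOrderedRing K] [FloorRing K] {c : ZMod n → ℕ} {z : ZMod n → ℤ} :
    (∃ r : ZMod n → K, IsFeasibleFlow c (fun i => (z i : K)) r) ↔
      ∃ s : ZMod n → ℤ, IsFeasibleFlow c z s := by
  refine ⟨fun ⟨r, hr⟩ => ⟨_, hr.floor⟩, fun ⟨s, hs⟩ => ⟨fun i => s i, fun i => ?_⟩⟩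
  dsimp only
  exact_mod_cast hs i

theorem exists_maximal_isFeasibleFlow [NeZero n] {c : ZMod n → ℕ} {z s : ZMod n → ℤ}
    (hs : IsFeasibleFlow c z s) : ∃ s, Maximal (IsFeasibleFlow c z) s := by
  have hfin : {s | IsFeasibleFlow c z s}.Finite :=
    (Set.finite_Icc (fun i => -(c i : ℤ)) (fun i => (c i : ℤ))).subset fun s hs =>
      ⟨fun i => (abs_le.1 (hs i).1).1, fun i => (abs_le.1 (hs i).1).2⟩
  exact hfin.exists_maximal ⟨s, hs⟩

theorem eq_capacity_or_eq_of_maximal {c : ZMod n → ℕ} {z s : ZMod n → ℤ}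
    (hs : Maximal (IsFeasibleFlow c z) s) (i : ZMod n) : s i = z i + s (i - 1) ∨ s i = c i := by
  by_contra! hi
  have hle : s ≤ Function.update s i (s i + 1) := by simp
  have hfeas : IsFeasibleFlow c z (Function.update s i (s i + 1)) := by
    intro k
    have hk := hs.prop k
    have hpred : s (k - 1) ≤ Function.update s i (s i + 1) (k - 1) := hle (k - 1)
    rw [abs_le] at hk ⊢
    rcases eq_or_ne k i with rfl | hki
    · rw [Function.update_self]
      omega
    · rw [Function.update_of_ne hki]
      omega
  have := hs.le_of_ge hfeas hle i
  simp at this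

theorem exists_eq_capacity_of_maximal {c : ZMod n → ℕ} {z s : ZMod n → ℤ}
    (hs : Maximal (IsFeasibleFlow c z) s) : ∃ i, s i = c i := by
  by_contra! hne
  have hfeas : IsFeasibleFlow c z (s + 1) := by
    intro i
    have hi := hs.prop i
    have := hne i
    rw [abs_le] at hi ⊢
    simp only [Pi.add_apply, Pi.one_apply]
    omega
  have := hs.le_of_ge hfeas (by simp) 0
  simp at this

/-- The flows `s` with `|s i| ≤ c i` for which a vertex `i` with positive slack `p i` has `s i` at
full capacity, and for which some `s i` is at full capacity; see `mem_saturatedFlows`. Written as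
a difference of boxes, so that it can be counted. -/
noncomputable def saturatedFlows {ι : Type*} [Fintype ι] [DecidableEq ι] (c p : ι → ℕ) :
    Finset (ι → ℤ) :=
  Fintype.piFinset (fun i => if p i = 0 then Finset.Icc (-(c i : ℤ)) (c i) else {(c i : ℤ)}) \
    Fintype.piFinset (fun i => if p i = 0 then Finset.Ico (-(c i : ℤ)) (c i) else ∅)

theorem mem_saturatedFlows {ι : Type*} [Fintype ι] [DecidableEq ι] {c p : ι → ℕ} {s : ι → ℤ} :
    s ∈ saturatedFlows c p ↔
      (∀ i, |s i| ≤ c i ∧ (p i = 0 ∨ s i = c i)) ∧ ∃ i, s i = c i := by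
  have hbox : ∀ i, s i ∈ (if p i = 0 then Finset.Icc (-(c i : ℤ)) (c i) else {(c i : ℤ)}) ↔
      |s i| ≤ c i ∧ (p i = 0 ∨ s i = c i) := by
    intro i
    rw [abs_le]
    split_ifs with hp
    · simp [hp]
    · simp only [Finset.mem_singleton, hp, false_or]
      omega
  have hopen : ∀ i, s i ∈ (if p i = 0 then Finset.Ico (-(c i : ℤ)) (c i) else ∅) ↔
      (|s i| ≤ c i ∧ (p i = 0 ∨ s i = c i)) ∧ s i ≠ c i := by
    intro i
    rw [abs_le]
    split_ifs with hp
    · simp only [Finset.mem_Ico, hp, true_or, and_true]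
      omega
    · simp [hp]
  simp only [saturatedFlows, Finset.mem_sdiff, Fintype.mem_piFinset, hbox, hopen, forall_and,
    not_and, ne_eq]
  grind

theorem card_saturatedFlows {ι R : Type*} [Fintype ι] [DecidableEq ι] [CommRing R]
    (c p : ι → ℕ) :
    ((saturatedFlows c p).card : R) =
      ∏ i, ((if p i = 0 then 2 * (c i : R) else 0) + 1) -
        ∏ i, (if p i = 0 then 2 * (c i : R) else 0) := by
  have hIcc : ∀ k : ℕ, ((Finset.Icc (-(k : ℤ)) k).card) = 2 * k + 1 := fun k => by
    rw [Int.card_Icc]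
    omega
  have hIco : ∀ k : ℕ, ((Finset.Ico (-(k : ℤ)) k).card) = 2 * k := fun k => by
    rw [Int.card_Ico]
    omega
  rw [saturatedFlows, Finset.cast_card_sdiff, Fintype.card_piFinset, Fintype.card_piFinset]
  · simp only [apply_ite Finset.card, hIcc, hIco, Finset.card_singleton, Finset.card_empty,
      Nat.cast_prod, Nat.cast_ite, Nat.cast_add, Nat.cast_mul, Nat.cast_ofNat, Nat.cast_one,
      Nat.cast_zero, ite_add, zero_add]
  · refine Fintype.piFinset_subset _ _ fun i => ?_
    split_ifs
    exacts [Finset.Ico_subset_Icc_self, Finset.empty_subset _]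

/-- The supplies for which the flow `s` leaves the slack `p i` at each vertex `i`. -/
def flowSupply (p : ZMod n → ℕ) (s : ZMod n → ℤ) (i : ZMod n) : ℤ := p i + s i - s (i - 1)

theorem sum_flowSupply [NeZero n] (p : ZMod n → ℕ) (s : ZMod n → ℤ) :
    ∑ i, flowSupply p s i = ∑ i, (p i : ℤ) := by
  have hshift : ∑ i, s (i - 1) = ∑ i, s i := (Equiv.subRight (1 : ZMod n)).sum_comp s
  simp only [flowSupply, Finset.sum_sub_distrib, Finset.sum_add_distrib, hshift]
  ring

theorem isFeasibleFlow_flowSupply [NeZero n] {c p : ZMod n → ℕ} {s : ZMod n → ℤ}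
    (hs : s ∈ saturatedFlows c p) : IsFeasibleFlow c (flowSupply p s) s := by
  refine fun i => ⟨((mem_saturatedFlows.1 hs).1 i).1, ?_⟩
  simp [flowSupply]

theorem exists_mem_saturatedFlows_of_maximal [NeZero n] {c : ZMod n → ℕ} {z s : ZMod n → ℤ}
    (hs : Maximal (IsFeasibleFlow c z) s) :
    ∃ p, s ∈ saturatedFlows c p ∧ flowSupply p s = z := by
  refine ⟨fun i => (z i + s (i - 1) - s i).toNat,
    mem_saturatedFlows.2 ⟨fun i => ⟨(hs.prop i).1, ?_⟩, exists_eq_capacity_of_maximal hs⟩, ?_⟩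
  · exact (eq_capacity_or_eq_of_maximal hs i).imp_left fun h => by simp [h]
  · ext i
    have := (hs.prop i).2
    rw [flowSupply]
    omega

/-- The bound `s ≤ s'` is transported around the cycle from a vertex where `s'` is at capacity. -/
theorem IsFeasibleFlow.le_of_mem_saturatedFlows [NeZero n] {c p : ZMod n → ℕ} {s s' : ZMod n → ℤ}
    (hs : IsFeasibleFlow c (flowSupply p s') s) (hs' : s' ∈ saturatedFlows c p) : s ≤ s' := by
  obtain ⟨hsat, i₀, hi₀⟩ := mem_saturatedFlows.1 hs'
  have hcap : ∀ i, s i ≤ c i := fun i => (abs_le.1 (hs i).1).2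
  have hstep : ∀ i, s (i - 1) ≤ s' (i - 1) → s i ≤ s' i := by
    intro i hi
    rcases (hsat i).2 with hp | hfull
    · have := (hs i).2
      simp only [flowSupply, hp] at this
      omega
    · exact (hcap i).trans hfull.ge
  have hall : ∀ k : ℕ, s (i₀ + k) ≤ s' (i₀ + k) := by
    intro k
    induction k with
    | zero => simpa [hi₀] using hcap i₀
    | succ k ih => exact hstep _ (by simpa [← add_assoc] using ih)
  intro i
  simpa using hall (i - i₀).val

theorem bijOn_flowSupply [NeZero n] (c : ZMod n → ℕ) :
    Set.BijOn (fun q : (ZMod n → ℕ) × (ZMod n → ℤ) => flowSupply q.1 q.2)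
      {q | q.2 ∈ saturatedFlows c q.1} {z | ∃ s, IsFeasibleFlow c z s} := by
  refine ⟨fun q hq => ⟨q.2, isFeasibleFlow_flowSupply hq⟩, ?_, ?_⟩
  · rintro ⟨p, s⟩ hs ⟨p', s'⟩ hs' (heq : flowSupply p s = flowSupply p' s')
    obtain rfl : s = s' := le_antisymm
      ((heq ▸ isFeasibleFlow_flowSupply hs).le_of_mem_saturatedFlows hs')
      ((heq ▸ isFeasibleFlow_flowSupply hs').le_of_mem_saturatedFlows hs)
    obtain rfl : p = p' := by
      ext i
      have := congrFun heq i
      simp only [flowSupply] at this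
      omega
    rfl
  · rintro z ⟨s, hs⟩
    obtain ⟨s, hmax⟩ := exists_maximal_isFeasibleFlow hs
    obtain ⟨p, hsat, hz⟩ := exists_mem_saturatedFlows_of_maximal hmax
    exact ⟨(p, s), hsat, hz⟩

end CycleFlows

/-! ### Generating functions -/

/-- A combinatorial class: a type whose elements have sizes in `ℕ`, with finitely many elements of
each size. The elements of size `t` are collected in `level t`. -/
structure CombClass (T : Type*) where
  size : T → ℕ
  level : ℕ → Finset T
  mem_level : ∀ {t x}, x ∈ level t ↔ size x = t

namespace CombClass

section GenFun

variable {R T U ι : Type*} [CommSemiring R]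

/-- The generating function of a combinatorial class whose elements are weighted by `f`. -/
noncomputable def genFun (G : CombClass T) (f : T → R) : PowerSeries R :=
  PowerSeries.mk fun t => ∑ x ∈ G.level t, f x

theorem coeff_genFun (G : CombClass T) (f : T → R) (t : ℕ) :
    PowerSeries.coeff t (G.genFun f) = ∑ x ∈ G.level t, f x :=
  PowerSeries.coeff_mk _ _

theorem genFun_add (G : CombClass T) (f g : T → R) :
    G.genFun (fun x => f x + g x) = G.genFun f + G.genFun g := by
  ext t
  simp [coeff_genFun, Finset.sum_add_distrib]

theorem genFun_sum (G : CombClass T) (s : Finset ι) (f : ι → T → R) :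
    G.genFun (fun x => ∑ j ∈ s, f j x) = ∑ j ∈ s, G.genFun (f j) := by
  ext t
  simp only [coeff_genFun, map_sum]
  exact Finset.sum_comm

theorem genFun_sub {R : Type*} [CommRing R] (G : CombClass T) (f g : T → R) :
    G.genFun (fun x => f x - g x) = G.genFun f - G.genFun g := by
  ext t
  simp [coeff_genFun, Finset.sum_sub_distrib]

open Classical in
/-- The product of two combinatorial classes, with additive sizes. -/
noncomputable def prod (G : CombClass T) (H : CombClass U) : CombClass (T × U) where
  size x := G.size x.1 + H.size x.2
  level t := (Finset.HasAntidiagonal.antidiagonal t).biUnion fun k => G.level k.1 ×ˢ H.level k.2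
  mem_level := by simp [mem_level]

theorem genFun_prod (G : CombClass T) (H : CombClass U) (f : T → R) (g : U → R) :
    (G.prod H).genFun (fun x => f x.1 * g x.2) = G.genFun f * H.genFun g := by
  classical
  ext t
  simp only [coeff_genFun, PowerSeries.coeff_mul, Finset.sum_mul_sum, ← Finset.sum_product',
    prod]
  refine Finset.sum_biUnion fun k _ l _ hkl => Finset.disjoint_left.2 fun x hk hl => hkl ?_
  simp only [Finset.mem_product, mem_level] at hk hl
  exact Prod.ext (hk.1.symm.trans hl.1) (hk.2.symm.trans hl.2)

variable [Fintype ι] {S : ι → Type*}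

open Classical in
/-- The product of a finite family of combinatorial classes, with additive sizes. -/
noncomputable def pi (G : ∀ i, CombClass (S i)) : CombClass (∀ i, S i) where
  size x := ∑ i, (G i).size (x i)
  level t := (Finset.univ.finsuppAntidiag t).biUnion
    fun k => Fintype.piFinset fun i => (G i).level (k i)
  mem_level {t x} := by
    simp only [Finset.mem_biUnion, Finset.mem_finsuppAntidiag, Fintype.mem_piFinset, mem_level]
    refine ⟨?_, fun hx => ?_⟩
    · rintro ⟨k, ⟨rfl, -⟩, hk⟩
      exact Finset.sum_congr rfl fun i _ => hk i
    · exact ⟨Finsupp.equivFunOnFinite.symm fun i => (G i).size (x i), by simpa using hx, by simp⟩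

theorem genFun_pi (G : ∀ i, CombClass (S i)) (f : ∀ i, S i → R) :
    (pi G).genFun (fun x => ∏ i, f i (x i)) = ∏ i, (G i).genFun (f i) := by
  classical
  ext t
  simp only [coeff_genFun, PowerSeries.coeff_prod, Finset.prod_univ_sum, pi]
  refine Finset.sum_biUnion fun k _ l _ hkl => Finset.disjoint_left.2 fun x hk hl => hkl ?_
  simp only [Fintype.mem_piFinset, mem_level] at hk hl
  ext i
  exact (hk i).symm.trans (hl i)

theorem genFun_pi_one (G : CombClass T) :
    (pi fun _ : ι => G).genFun (fun _ => (1 : R)) = G.genFun (fun _ => 1) ^ Fintype.card ι := by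
  simpa using genFun_pi (fun _ : ι => G) fun _ _ => (1 : R)

theorem genFun_pi_sum (G : CombClass T) (f : T → R) :
    (pi fun _ : ι => G).genFun (fun x => ∑ j, f (x j)) =
      (Fintype.card ι : PowerSeries R) *
        (G.genFun f * G.genFun (fun _ => 1) ^ (Fintype.card ι - 1)) := by
  classical
  have hterm : ∀ j, (pi fun _ : ι => G).genFun (fun x => f (x j)) =
      G.genFun f * G.genFun (fun _ => 1) ^ (Fintype.card ι - 1) := by
    intro j
    have hprod : ∀ x : ι → T, f (x j) = ∏ i, (if i = j then f else fun _ => 1) (x i) := by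
      intro x
      simp [ite_apply]
    simp only [hprod, genFun_pi]
    rw [← Finset.mul_prod_erase _ _ (Finset.mem_univ j), if_pos rfl,
      Finset.prod_congr rfl fun i hi => by rw [if_neg (Finset.ne_of_mem_erase hi)],
      Finset.prod_const, Finset.card_erase_of_mem (Finset.mem_univ j), Finset.card_univ]
  simp [genFun_sum, hterm]

end GenFun

/-- The natural numbers as a combinatorial class. -/
def nat : CombClass ℕ where
  size p := p
  level t := {t}
  mem_level := Finset.mem_singleton

/-- The integers as a combinatorial class, sized by absolute value. -/
def int : CombClass ℤ where
  size y := y.natAbs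
  level t := {(t : ℤ), -(t : ℤ)}
  mem_level := by
    simp only [Finset.mem_insert, Finset.mem_singleton]
    omega

section

variable {R : Type*} [CommSemiring R]

theorem genFun_nat_ite_eq_zero (r : R) :
    nat.genFun (fun p => if p = 0 then r else 0) = PowerSeries.C r := by
  ext t
  simp [coeff_genFun, nat, PowerSeries.coeff_C, eq_comm]

theorem constantCoeff_genFun_int (f : ℤ → R) :
    PowerSeries.constantCoeff (int.genFun f) = f 0 := by
  rw [← PowerSeries.coeff_zero_eq_constantCoeff_apply]
  simp [coeff_genFun, int]

theorem coeff_succ_genFun_int (f : ℤ → R) (t : ℕ) :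
    PowerSeries.coeff (t + 1) (int.genFun f) = f (t + 1) + f (-(t + 1)) := by
  rw [coeff_genFun]
  exact_mod_cast Finset.sum_pair (by omega)

end

variable {R : Type*} [CommRing R]

theorem genFun_nat_one_mul : nat.genFun (fun _ => (1 : R)) * (1 - PowerSeries.X) = 1 := by
  simp only [genFun, nat, Finset.sum_singleton]
  exact PowerSeries.mk_one_mul_one_sub_eq_one R

theorem genFun_int_one_mul :
    int.genFun (fun _ => (1 : R)) * (1 - PowerSeries.X) = 1 + PowerSeries.X := by
  ext (_ | _ | t) <;>
    simp [mul_sub, constantCoeff_genFun_int, coeff_succ_genFun_int, PowerSeries.coeff_one,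
      PowerSeries.coeff_succ_mul_X, PowerSeries.coeff_X]

theorem genFun_int_toNat_mul :
    int.genFun (fun y => (y.toNat : R)) * (1 - PowerSeries.X) ^ 2 = PowerSeries.X := by
  have hcoeff : ∀ t : ℕ, PowerSeries.coeff t (int.genFun fun y => (y.toNat : R)) = t := by
    rintro (_ | t)
    · simp [constantCoeff_genFun_int]
    · rw [coeff_succ_genFun_int, Int.toNat_of_nonpos (show -((t : ℤ) + 1) ≤ 0 by omega)]
      simp
  have hone : int.genFun (fun y => (y.toNat : R)) * (1 - PowerSeries.X) =
      PowerSeries.X * PowerSeries.mk 1 := by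
    ext (_ | t) <;>
      simp [mul_sub, hcoeff, constantCoeff_genFun_int, PowerSeries.coeff_succ_mul_X,
        PowerSeries.coeff_succ_X_mul]
  rw [sq, ← mul_assoc, hone, mul_assoc, PowerSeries.mk_one_mul_one_sub_eq_one, mul_one]

end CombClass

section EdgeBundles

variable {ι : Type*} [Fintype ι]

/-- The total of the positive entries of an integer vector. The total of the negative entries, in
absolute value, is `posTotal (-y)`. -/
def posTotal (y : ι → ℤ) : ℕ := ∑ j, (y j).toNat

theorem sum_add_posTotal_neg (y : ι → ℤ) : ∑ j, y j + posTotal (-y) = posTotal y := by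
  rw [posTotal, posTotal, Nat.cast_sum, Nat.cast_sum, ← Finset.sum_add_distrib]
  refine Finset.sum_congr rfl fun j _ => ?_
  rw [Pi.neg_apply]
  omega

/-- The class counting the contributions to a lattice point of a bundle `ι` of parallel edges: the
coordinates of the edges, together with the slack of the flow at the tail of the bundle. -/
noncomputable def bundleClass (ι : Type*) [Fintype ι] : CombClass ((ι → ℤ) × ℕ) :=
  (CombClass.pi fun _ => CombClass.int).prod CombClass.nat

theorem size_bundleClass (q : (ι → ℤ) × ℕ) :
    (bundleClass ι).size q = posTotal q.1 + posTotal (-q.1) + q.2 := by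
  simp only [bundleClass, CombClass.prod, CombClass.pi, CombClass.int, CombClass.nat, posTotal,
    ← Finset.sum_add_distrib, Pi.neg_apply, Int.toNat_add_toNat_neg_eq_natAbs]

variable {R : Type*} [CommRing R]

theorem genFun_bundleClass_one_mul :
    (bundleClass ι).genFun (fun _ => (1 : R)) * (1 - PowerSeries.X) ^ (Fintype.card ι + 1) =
      (1 + PowerSeries.X) ^ Fintype.card ι := by
  have hprod := CombClass.genFun_prod (CombClass.pi fun _ : ι => CombClass.int) CombClass.nat
    (fun _ => (1 : R)) fun _ => 1
  rw [mul_one, CombClass.genFun_pi_one] at hprod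
  rw [bundleClass, hprod, pow_succ, mul_mul_mul_comm, CombClass.genFun_nat_one_mul, ← mul_pow,
    CombClass.genFun_int_one_mul, mul_one]

theorem genFun_bundleClass_posTotal_mul :
    (bundleClass ι).genFun (fun q => if q.2 = 0 then 2 * (posTotal q.1 : R) else 0) *
        (1 - PowerSeries.X) ^ (Fintype.card ι + 1) =
      2 * (Fintype.card ι : PowerSeries R) * PowerSeries.X *
        (1 + PowerSeries.X) ^ (Fintype.card ι - 1) := by
  have hprod := CombClass.genFun_prod (CombClass.pi fun _ : ι => CombClass.int) CombClass.nat
    (fun y => ∑ j, ((y j).toNat : R)) fun p => if p = 0 then 2 else 0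
  rw [CombClass.genFun_pi_sum CombClass.int fun y => (y.toNat : R),
    CombClass.genFun_nat_ite_eq_zero, map_ofNat] at hprod
  simp only [posTotal, Nat.cast_sum, mul_comm (2 : R), ← mul_ite_zero]
  rw [bundleClass, hprod]
  rcases Nat.eq_zero_or_pos (Fintype.card ι) with h0 | hpos
  · simp [h0]
  · obtain ⟨m, hm⟩ := Nat.exists_eq_add_of_lt hpos
    rw [hm, zero_add, Nat.add_sub_cancel]
    have hsplit (x y : PowerSeries R) : ((m + 1 : ℕ) : PowerSeries R) * (x * y ^ m) * 2 *
        (1 - PowerSeries.X) ^ (m + 1 + 1) = 2 * ((m + 1 : ℕ) : PowerSeries R) *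
          (x * (1 - PowerSeries.X) ^ 2) * (y * (1 - PowerSeries.X)) ^ m := by
      rw [mul_pow]
      ring
    rw [hsplit, CombClass.genFun_int_toNat_mul, CombClass.genFun_int_one_mul]

end EdgeBundles

/-! ### Lattice points of the multicycle polytope -/

section Multicycle

variable {n : ℕ} {a : ZMod n → ℕ}

/-- The attachment of the half-edges of the multicycle: the edges of the `i`-th bundle are oriented
from `i` to `i + 1`. -/
def multicycleAttach (a : ZMod n → ℕ) :
    (Σ i : ZMod n, Fin (a i)) ⊕ (Σ i : ZMod n, Fin (a i)) → ZMod n :=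
  Sum.elim (fun f => f.1) (fun f => f.1 + 1)

theorem multicycleEnds_eq_halfEdgeEnds :
    multicycleEnds n a = halfEdgeEnds (multicycleAttach a) :=
  rfl

theorem surjective_multicycleAttach (hV : ∀ i, ∃ f, i ∈ multicycleEnds n a f) :
    Function.Surjective (multicycleAttach a) := by
  intro i
  obtain ⟨f, hf⟩ := hV i
  rcases Sym2.mem_iff.1 hf with rfl | rfl
  exacts [⟨Sum.inl f, rfl⟩, ⟨Sum.inr f, rfl⟩]

theorem sum_multicycleAttach_fiber [NeZero n] {M : Type*} [AddCommMonoid M]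
    (w : (Σ i : ZMod n, Fin (a i)) ⊕ (Σ i : ZMod n, Fin (a i)) → M) (i : ZMod n) :
    ∑ h with multicycleAttach a h = i, w h =
      ∑ j, w (Sum.inl ⟨i, j⟩) + ∑ j, w (Sum.inr ⟨i - 1, j⟩) := by
  rw [Finset.sum_filter, Fintype.sum_sum_type, Fintype.sum_sigma, Fintype.sum_sigma]
  simp only [multicycleAttach, Sum.elim_inl, Sum.elim_inr, ← eq_sub_iff_add_eq]
  congr 1
  · exact (Fintype.sum_eq_single i fun k hk => by simp [hk]).trans (by simp)
  · exact (Fintype.sum_eq_single (i - 1) fun k hk => by simp [hk]).trans (by simp)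

/-- The total of the negative edge coordinates `y` at the vertex `i`, in absolute value. -/
def multicycleLoad (y : ∀ i, Fin (a i) → ℤ) (i : ZMod n) : ℕ :=
  posTotal (-y i) + posTotal (-y (i - 1))

/-- The point with edge coordinates `y` at which the flow problem at the vertices has supplies
`z`. -/
def multicyclePoint (y : ∀ i, Fin (a i) → ℤ) (z : ZMod n → ℤ) :
    ZMod n ⊕ (Σ i : ZMod n, Fin (a i)) → ℤ :=
  Sum.elim (fun i => z i + multicycleLoad y i) (fun f => y f.1 f.2)

theorem multicyclePoint_injective2 :
    Function.Injective2 (multicyclePoint (n := n) (a := a)) := by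
  intro y y' z z' h
  obtain rfl : y = y' := by
    ext i j
    exact congrFun h (Sum.inr ⟨i, j⟩)
  refine ⟨rfl, funext fun i => ?_⟩
  simpa [multicyclePoint] using congrFun h (Sum.inl i)

theorem exists_multicyclePoint_eq (x : ZMod n ⊕ (Σ i : ZMod n, Fin (a i)) → ℤ) :
    ∃ y z, multicyclePoint y z = x := by
  refine ⟨fun i j => x (Sum.inr ⟨i, j⟩),
    fun i => x (Sum.inl i) - multicycleLoad (fun i j => x (Sum.inr ⟨i, j⟩)) i, ?_⟩
  ext (i | f) <;> simp [multicyclePoint]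

theorem sum_multicyclePoint [NeZero n] (y : ∀ i, Fin (a i) → ℤ) (z : ZMod n → ℤ) :
    ∑ k, multicyclePoint y z k = ∑ i, (posTotal (y i) + posTotal (-y i) + z i) := by
  have hshift : ∑ i, (posTotal (-y (i - 1)) : ℤ) = ∑ i, (posTotal (-y i) : ℤ) :=
    (Equiv.subRight (1 : ZMod n)).sum_comp fun i => (posTotal (-y i) : ℤ)
  rw [Fintype.sum_sum_type, Fintype.sum_sigma]
  simp only [multicyclePoint, multicycleLoad, Sum.elim_inl, Sum.elim_inr, Nat.cast_add,
    fun i => (sum_add_posTotal_neg (y i)).symm, Finset.sum_add_distrib, hshift]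
  ring

theorem posPart_intCast {R : Type*} [Ring R] [LinearOrder R] [IsStrictOrderedRing R] (y : ℤ) :
    (y : R)⁺ = (y.toNat : R) := by
  rw [posPart_def, ← Int.cast_natCast, Int.toNat_eq_max, Int.cast_max, Int.cast_zero]

theorem negPart_intCast {R : Type*} [Ring R] [LinearOrder R] [IsStrictOrderedRing R] (y : ℤ) :
    (y : R)⁻ = ((-y).toNat : R) := by
  rw [← posPart_neg, ← Int.cast_neg, posPart_intCast]

theorem exists_flow_multicyclePoint_iff [NeZero n] (y : ∀ i, Fin (a i) → ℤ) (z : ZMod n → ℤ) :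
    (∃ σ : (Σ i : ZMod n, Fin (a i)) → ℝ, (∀ f, |σ f| ≤ (y f.1 f.2 : ℝ)⁺) ∧
        ∀ i, ∑ h with multicycleAttach a h = i,
          Sum.elim (fun f => (y f.1 f.2 : ℝ)⁻ + σ f) (fun f => (y f.1 f.2 : ℝ)⁻ - σ f) h ≤
            z i + multicycleLoad y i) ↔
      ∃ s : ZMod n → ℤ, IsFeasibleFlow (fun i => posTotal (y i)) z s := by
  have hvertex : ∀ (σ : (Σ i : ZMod n, Fin (a i)) → ℝ) (i : ZMod n),
      ∑ h with multicycleAttach a h = i,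
          Sum.elim (fun f => (y f.1 f.2 : ℝ)⁻ + σ f) (fun f => (y f.1 f.2 : ℝ)⁻ - σ f) h ≤
            z i + multicycleLoad y i ↔
        ∑ j, σ ⟨i, j⟩ ≤ z i + ∑ j, σ ⟨i - 1, j⟩ := by
    intro σ i
    simp only [sum_multicycleAttach_fiber, Sum.elim_inl, Sum.elim_inr, negPart_intCast,
      Finset.sum_add_distrib, Finset.sum_sub_distrib, multicycleLoad, posTotal, Nat.cast_add,
      Nat.cast_sum, Pi.neg_apply]
    constructor <;> intro h <;> linarith
  simp only [posPart_intCast, hvertex]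
  rw [exists_abs_le_and_fiber_sum_iff (fun _ => Nat.cast_nonneg _)
    fun r : ZMod n → ℝ => ∀ i, r i ≤ z i + r (i - 1), ← exists_isFeasibleFlow_intCast_iff (K := ℝ)]
  simp only [IsFeasibleFlow, forall_and, posTotal, Nat.cast_sum]

theorem multicyclePoint_mem_smul_cosmoPolytope_iff [NeZero n]
    (hV : ∀ i, ∃ f, i ∈ multicycleEnds n a f) {t : ℕ} (ht : t ≠ 0)
    (y : ∀ i, Fin (a i) → ℤ) (z : ZMod n → ℤ) :
    (fun k => (multicyclePoint y z k : ℝ)) ∈ (t : ℝ) • cosmoPolytope (multicycleEnds n a) ↔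
      (∃ s : ZMod n → ℤ, IsFeasibleFlow (fun i => posTotal (y i)) z s) ∧
        ∑ i, (posTotal (y i) + posTotal (-y i) + z i) = t := by
  rw [multicycleEnds_eq_halfEdgeEnds, mem_smul_cosmoPolytope_iff_exists_flow
    (surjective_multicycleAttach hV) (Nat.cast_pos.2 (Nat.pos_of_ne_zero ht)),
    ← exists_flow_multicyclePoint_iff, ← sum_multicyclePoint]
  simp only [multicyclePoint, Sum.elim_inl, Sum.elim_inr]
  norm_cast

/-- The class formed by the bundles of the multicycle; the lattice points of the cosmological
polytope are its elements together with a saturated flow. -/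
noncomputable def multicycleClass [NeZero n] (a : ZMod n → ℕ) :
    CombClass (∀ i, (Fin (a i) → ℤ) × ℕ) :=
  CombClass.pi fun i => bundleClass (Fin (a i))

theorem size_multicycleClass [NeZero n] (q : ∀ i, (Fin (a i) → ℤ) × ℕ) (s : ZMod n → ℤ) :
    ((multicycleClass a).size q : ℤ) =
      ∑ i, (posTotal (q i).1 + posTotal (-(q i).1) + flowSupply (fun i => (q i).2) s i) := by
  rw [Finset.sum_add_distrib, sum_flowSupply, ← Finset.sum_add_distrib]
  simp [multicycleClass, CombClass.pi, size_bundleClass]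

theorem bijOn_multicyclePoint [NeZero n] (hV : ∀ i, ∃ f, i ∈ multicycleEnds n a f) {t : ℕ}
    (ht : t ≠ 0) :
    Set.BijOn
      (fun d : Σ _ : (∀ i, (Fin (a i) → ℤ) × ℕ), ZMod n → ℤ =>
        multicyclePoint (fun i => (d.1 i).1) (flowSupply (fun i => (d.1 i).2) d.2))
      (((multicycleClass a).level t).sigma fun q =>
        saturatedFlows (fun i => posTotal (q i).1) fun i => (q i).2)
      {x | (fun k => (x k : ℝ)) ∈ (t : ℝ) • cosmoPolytope (multicycleEnds n a)} := by
  refine ⟨?_, ?_, ?_⟩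
  · rintro ⟨q, s⟩ hd
    obtain ⟨hq, hs⟩ := Finset.mem_sigma.1 hd
    refine (multicyclePoint_mem_smul_cosmoPolytope_iff hV ht _ _).2
      ⟨(bijOn_flowSupply _).mapsTo (x := (_, s)) hs, ?_⟩
    rw [← size_multicycleClass q s, (CombClass.mem_level _).1 hq]
  · rintro ⟨q, s⟩ hd ⟨q', s'⟩ hd' heq
    obtain ⟨hy, hz⟩ := multicyclePoint_injective2 heq
    have hs := (Finset.mem_sigma.1 hd).2
    have hs' := (Finset.mem_sigma.1 hd').2
    have hcap : ∀ i, posTotal (q i).1 = posTotal (q' i).1 := fun i => by rw [congrFun hy i]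
    simp only [hcap] at hs
    obtain ⟨hp, rfl⟩ := Prod.ext_iff.1
      ((bijOn_flowSupply _).injOn (x₁ := (_, s)) (x₂ := (_, s')) hs hs' hz)
    obtain rfl : q = q' := funext fun i => Prod.ext (congrFun hy i) (congrFun hp i)
    rfl
  · intro x hx
    obtain ⟨y, z, rfl⟩ := exists_multicyclePoint_eq x
    obtain ⟨hz, hsum⟩ := (multicyclePoint_mem_smul_cosmoPolytope_iff hV ht y z).1 hx
    obtain ⟨⟨p, s⟩, hs, rfl⟩ := (bijOn_flowSupply _).surjOn hz
    refine ⟨⟨fun i => (y i, p i), s⟩, Finset.mem_sigma.2 ⟨(CombClass.mem_level _).2 ?_, hs⟩, rfl⟩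
    exact_mod_cast (size_multicycleClass (fun i => (y i, p i)) s).trans hsum

theorem latticePointCount_multicycle [NeZero n] (hV : ∀ i, ∃ f, i ∈ multicycleEnds n a f) {t : ℕ}
    (ht : t ≠ 0) :
    latticePointCount (cosmoPolytope (multicycleEnds n a)) t =
      ∑ q ∈ (multicycleClass a).level t,
        (saturatedFlows (fun i => posTotal (q i).1) fun i => (q i).2).card := by
  have hbij := bijOn_multicyclePoint hV ht
  rw [latticePointCount, ← hbij.image_eq, hbij.injOn.ncard_image, Set.ncard_coe_finset,
    Finset.card_sigma]

theorem ehrhartSeries_multicycle [NeZero n] (hV : ∀ i, ∃ f, i ∈ multicycleEnds n a f) :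
    ehrhartSeries (cosmoPolytope (multicycleEnds n a)) =
      ∏ i, (bundleClass (Fin (a i))).genFun
          (fun q => (if q.2 = 0 then 2 * (posTotal q.1 : ℚ) else 0) + 1) -
        ∏ i, (bundleClass (Fin (a i))).genFun
          (fun q => if q.2 = 0 then 2 * (posTotal q.1 : ℚ) else 0) := by
  ext t
  rw [ehrhartSeries, PowerSeries.coeff_mk]
  split_ifs with ht
  · rw [ht, PowerSeries.coeff_zero_eq_constantCoeff_apply, map_sub, map_prod, map_prod]
    have hone : ∀ i, PowerSeries.constantCoeff
        ((bundleClass (Fin (a i))).genFun fun _ => (1 : ℚ)) = 1 := fun i => by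
      simpa using congrArg PowerSeries.constantCoeff
        (genFun_bundleClass_one_mul (ι := Fin (a i)) (R := ℚ))
    have hzero : ∀ i, PowerSeries.constantCoeff ((bundleClass (Fin (a i))).genFun
        fun q => if q.2 = 0 then 2 * (posTotal q.1 : ℚ) else 0) = 0 := fun i => by
      simpa using congrArg PowerSeries.constantCoeff
        (genFun_bundleClass_posTotal_mul (ι := Fin (a i)) (R := ℚ))
    simp [CombClass.genFun_add, hone, hzero, NeZero.ne n]
  · rw [latticePointCount_multicycle hV ht, ← CombClass.genFun_pi, ← CombClass.genFun_pi,
      ← CombClass.genFun_sub, CombClass.coeff_genFun, Nat.cast_sum]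
    exact Finset.sum_congr rfl fun q _ => card_saturatedFlows _ _

/-- The `h^*`-polynomial of the cosmological polytope of the multicycle with bundle sizes `a`. -/
noncomputable def multicycleHStar [NeZero n] (a : ZMod n → ℕ) : ℚ[X] :=
  ∏ i, (2 * (a i : ℚ[X]) * X * (1 + X) ^ (a i - 1) + (1 + X) ^ a i) -
    ∏ i, 2 * (a i : ℚ[X]) * X * (1 + X) ^ (a i - 1)

theorem isHStarPoly_multicycleHStar [NeZero n] (hV : ∀ i, ∃ f, i ∈ multicycleEnds n a f) :
    IsHStarPoly (cosmoPolytope (multicycleEnds n a))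
      (Fintype.card (ZMod n) + Fintype.card (Σ i : ZMod n, Fin (a i)) - 1)
      (multicycleHStar a) := by
  have hdim : Fintype.card (ZMod n) + Fintype.card (Σ i : ZMod n, Fin (a i)) - 1 + 1 =
      ∑ i, (Fintype.card (Fin (a i)) + 1) := by
    have := Fintype.card_pos (α := ZMod n)
    simp only [Fintype.card_sigma, Finset.sum_add_distrib, Finset.sum_const, Finset.card_univ,
      smul_eq_mul, mul_one]
    omega
  rw [IsHStarPoly, ehrhartSeries_multicycle hV, hdim, ← Finset.prod_pow_eq_pow_sum, sub_mul,
    ← Finset.prod_mul_distrib, ← Finset.prod_mul_distrib]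
  simp only [CombClass.genFun_add, add_mul, genFun_bundleClass_one_mul,
    genFun_bundleClass_posTotal_mul]
  simp only [Fintype.card_fin, multicycleHStar, ← Polynomial.coeToPowerSeries.ringHom_apply,
    map_sub, map_prod, map_add, map_mul, map_pow, map_one, map_natCast, map_ofNat]
  simp only [Polynomial.coeToPowerSeries.ringHom_apply, Polynomial.coe_X]

theorem eval_one_multicycleHStar [NeZero n] (a : ZMod n → ℕ) :
    (multicycleHStar a).eval 1 =
      ∏ i, (1 + (a i : ℚ)) * 2 ^ a i - ∏ i, (a i : ℚ) * 2 ^ a i := by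
  have hbundle : ∀ m : ℕ, 2 * (m : ℚ) * 1 * (1 + 1) ^ (m - 1) = m * 2 ^ m := by
    rintro (_ | m)
    · simp
    · rw [Nat.add_sub_cancel, pow_succ]
      ring
  simp only [multicycleHStar, eval_sub, eval_prod, eval_add, eval_mul, eval_pow, eval_one, eval_X,
    eval_natCast, eval_ofNat, hbundle]
  congr 1
  refine Finset.prod_congr rfl fun i _ => ?_
  ring

end Multicycle

theorem IsHStarPoly.unique {ι : Type*} {P : Set (ι → ℝ)} {d : ℕ} {h h' : ℚ[X]}
    (hh : IsHStarPoly P d h) (hh' : IsHStarPoly P d h') : h = h' :=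
  Polynomial.coe_injective ℚ (hh.symm.trans hh')

theorem normalized_volume_multicycle_general (n : ℕ) [NeZero n] (a : ZMod n → ℕ)
    (hV : ∀ i, ∃ f, i ∈ multicycleEnds n a f) (h : Polynomial ℚ)
    (hh : IsHStarPoly (cosmoPolytope (multicycleEnds n a))
      (Fintype.card (ZMod n) + Fintype.card (Σ i : ZMod n, Fin (a i)) - 1) h) :
    h.eval 1 =
      (∏ i : ZMod n, (1 + (a i : ℚ)) * 2 ^ (a i)) -
        ∏ i : ZMod n, (a i : ℚ) * 2 ^ (a i) := by
  rw [hh.unique (isHStarPoly_multicycleHStar hV), eval_one_multicycleHStar]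

/-- Let `n ≥ 3` and `a = (a_1, …, a_n)` with all `a_i ≥ 1`.  The normalized
volume of the cosmological polytope of the multicycle `C_a` is
`Vol(C_{C_a}) = h*(C_{C_a}; 1) = ∏_i (1 + a_i) 2^{a_i} − ∏_i a_i 2^{a_i}`. -/
theorem normalized_volume_multicycle (n : ℕ) [NeZero n] (hn : 3 ≤ n)
    (a : ZMod n → ℕ) (ha : ∀ i, 1 ≤ a i)
    (h : Polynomial ℚ)
    (hh : IsHStarPoly (cosmoPolytope (multicycleEnds n a))
      (Fintype.card (ZMod n) + Fintype.card (Σ i : ZMod n, Fin (a i)) - 1) h) :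
    h.eval 1 =
      (∏ i : ZMod n, (1 + (a i : ℚ)) * 2 ^ (a i)) -
        ∏ i : ZMod n, (a i : ℚ) * 2 ^ (a i) :=
  normalized_volume_multicycle_general n a
    (fun i => ⟨⟨i, ⟨0, ha i⟩⟩, Sym2.mem_mk_left _ _⟩) h hh
end
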